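/- arXiv:1310.2858 — 3 statements merged into one kernel-verified Lean document; each statement's English description precedes it below -/
import Mathlib

section
/- (Very-large majority, third bound.) There exists n₀ such that for all n ≥ n₀ the following holds. Let c̄ be a k-cd for n nodes with s(c̄) ≥ n/3, attained with majority color m ∈ M(c̄). If n − c_m < n^{1/4}·log n, then Pr[ C̄_{m,t+1} ≥ n^{1/4}·log n | C_t = c̄ ] ≤ 1/n², where C̄_{m,t+1} = n − C_{m,t+1}. -/
open Finset

/-- The color appearing at least twice among `x, y, z`, or `x` if all three are distinct. -/
def maj3 {k : ℕ} (x y z : Fin k) : Fin k := if y = z then y else x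

/-- Number of nodes with color `j` in the assignment `a`. -/
def cnt {n k : ℕ} (a : Fin n → Fin k) (j : Fin k) : ℕ :=
  (Finset.univ.filter (fun i => a i = j)).card

/-- One sample for a round of the 3-majority dynamics: each node picks three nodes
(uniformly at random, with replacement). -/
abbrev Sample (n : ℕ) := Fin n → Fin n × Fin n × Fin n

/-- The assignment obtained from `a` after one step of the 3-majority dynamics with samples `S`. -/
def stepA {n k : ℕ} (a : Fin n → Fin k) (S : Sample n) : Fin n → Fin k :=
  fun i => maj3 (a (S i).1) (a (S i).2.1) (a (S i).2.2)

/-- Probability that the event `E` holds for the configuration obtained from `a`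
after one step of the 3-majority dynamics (samples are uniform and independent). -/
noncomputable def stepPr {n k : ℕ} (a : Fin n → Fin k) (E : (Fin n → Fin k) → Prop) : ℝ :=
  (Nat.card {S : Sample n // E (stepA a S)} : ℝ) / (Nat.card (Sample n) : ℝ)

/-- Expectation of `f` of the configuration obtained from `a` after one step of the
3-majority dynamics. -/
noncomputable def stepE {n k : ℕ} (a : Fin n → Fin k) (f : (Fin n → Fin k) → ℝ) : ℝ :=
  (∑ S : Sample n, f (stepA a S)) / (Nat.card (Sample n) : ℝ)

/-- `m(c̄)`: the size of the largest color class. -/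
def mval {k : ℕ} (c : Fin k → ℕ) : ℕ := Finset.univ.sup c

/-- `M(c̄)`: the set of colors attaining the maximum. -/
def Mset {k : ℕ} (c : Fin k → ℕ) : Finset (Fin k) :=
  Finset.univ.filter (fun j => c j = mval c)

/-- `s(c̄)`: the bias, i.e. the gap between the (unique) maximum and the second largest
color class; `0` if the maximum is not unique. -/
def sval {k : ℕ} (c : Fin k → ℕ) : ℕ :=
  if (Mset c).card = 1 then mval c - (Finset.univ \ Mset c).sup c else 0

/-- `α(c̄) = (n − m(c̄))·s(c̄)/n²`. -/
noncomputable def alphaV (n : ℕ) {k : ℕ} (c : Fin k → ℕ) : ℝ :=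
  ((n : ℝ) - mval c) * sval c / (n : ℝ) ^ 2

/-- `γ(c̄) = (n·m(c̄) − Σ_h c_h²)/n² − α(c̄)`. -/
noncomputable def gammaV (n : ℕ) {k : ℕ} (c : Fin k → ℕ) : ℝ :=
  ((n : ℝ) * mval c - ∑ h, (c h : ℝ) ^ 2) / (n : ℝ) ^ 2 - alphaV n c

/-- The trajectory of the 3-majority dynamics started at `a`, driven by the samples `S`
for the first `N` rounds. -/
def trajA {n k N : ℕ} (a : Fin n → Fin k) (S : Fin N → Sample n) : ℕ → Fin n → Fin k
  | 0 => a
  | t + 1 => if h : t < N then stepA (trajA a S t) (S ⟨t, h⟩) else trajA a S t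

/-- Probability of an event `E` for an `N`-round run of the 3-majority dynamics
(all samples of all rounds are uniform and independent). -/
noncomputable def runPr {n k : ℕ} (N : ℕ) (a : Fin n → Fin k)
    (E : (Fin N → Sample n) → Prop) : ℝ :=
  (Nat.card {S : Fin N → Sample n // E S} : ℝ) / (Nat.card (Fin N → Sample n) : ℝ)

/-!
A node adopts a color other than `m` only if two of its three samples have a color other than `m`.
If there are `q` such nodes before the step, this happens with probability at most `3 (q / n)²`, so
by a union bound over the `r`-sets of nodes, at least `r` nodes do so with probability at most
`C(n, r) (3 (q / n)²) ^ r ≤ (3 q² / n) ^ r`. For `q < n^{1/4} log n` the base is eventually at most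
`n^{-2/5}`, and the threshold `n^{1/4} log n` is eventually at least `5`, so `r = 5` gives
`(n^{-2/5}) ^ 5 = n⁻²`.
-/

open Filter

section Density

variable {ι α β : Type*} [Fintype ι] [DecidableEq ι] [Fintype α] [Fintype β]

theorem dens_product (s : Finset α) (t : Finset β) : (s ×ˢ t).dens = s.dens * t.dens := by
  simp [dens, mul_div_mul_comm]

theorem dens_piFinset {κ : ι → Type*} [∀ i, Fintype (κ i)] (t : ∀ i, Finset (κ i)) :
    (Fintype.piFinset t).dens = ∏ i, (t i).dens := by
  simp [dens, Finset.prod_div_distrib]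

/-- Only an inequality, because `univ.dens = 0` when `α` is empty. -/
theorem dens_piFinset_ite_mem_le (B : Finset α) (T : Finset ι) :
    (Fintype.piFinset fun i => if i ∈ T then B else univ).dens ≤ B.dens ^ #T :=
  calc (Fintype.piFinset fun i => if i ∈ T then B else univ).dens
      = ∏ i, (if i ∈ T then B else univ).dens := dens_piFinset _
    _ ≤ ∏ i, if i ∈ T then B.dens else 1 := by
        gcongr with i
        split_ifs
        exacts [le_rfl, dens_le_one]
    _ = B.dens ^ #T := by simp

theorem dens_filter_le_card_filter_mem_le [DecidableEq α] (B : Finset α) (r : ℕ) :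
    ({f : ι → α | r ≤ #{i | f i ∈ B}} : Finset (ι → α)).dens ≤
      (Fintype.card ι).choose r * B.dens ^ r := by
  have hcover : ({f : ι → α | r ≤ #{i | f i ∈ B}} : Finset (ι → α)) ⊆
      (powersetCard r univ).biUnion fun T =>
        Fintype.piFinset fun i => if i ∈ T then B else univ := by
    intro f hf
    obtain ⟨T, hT, hTr⟩ := exists_subset_card_eq ((mem_filter_univ f).1 hf)
    refine mem_biUnion.2 ⟨T, mem_powersetCard_univ.2 hTr, Fintype.mem_piFinset.2 fun i => ?_⟩
    split_ifs with hi
    · exact (mem_filter_univ i).1 (hT hi)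
    · exact mem_univ _
  calc ({f : ι → α | r ≤ #{i | f i ∈ B}} : Finset (ι → α)).dens
      ≤ ∑ T ∈ powersetCard r (univ : Finset ι),
          (Fintype.piFinset fun i => if i ∈ T then B else univ).dens :=
        (dens_le_dens hcover).trans dens_biUnion_le
    _ ≤ ∑ _ ∈ powersetCard r (univ : Finset ι), B.dens ^ r :=
        sum_le_sum fun T hT => mem_powersetCard_univ.1 hT ▸ dens_piFinset_ite_mem_le B T
    _ = (Fintype.card ι).choose r * B.dens ^ r := by simp

end Density

theorem ne_and_ne_of_maj3_ne {k : ℕ} {x y z m : Fin k} (h : maj3 x y z ≠ m) :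
    x ≠ m ∧ y ≠ m ∨ x ≠ m ∧ z ≠ m ∨ y ≠ m ∧ z ≠ m := by
  grind [maj3]

section Step

variable {n k : ℕ} (a : Fin n → Fin k) (m : Fin k)

/-- The nodes not colored `m`; its cardinality is the quantity `C̄_m` of the paper. -/
def minority : Finset (Fin n) := {i | a i ≠ m}

/-- The triples of samples that make a node adopt a color other than `m`. -/
def defectingTriples : Finset (Fin n × Fin n × Fin n) :=
  {x | maj3 (a x.1) (a x.2.1) (a x.2.2) ≠ m}

theorem card_minority : (#(minority a m) : ℝ) = n - cnt a m := by
  have h : cnt a m + #(minority a m) = n := by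
    simpa [cnt, minority] using
      card_filter_add_card_filter_not (s := (univ : Finset (Fin n))) (a · = m)
  rw [eq_sub_iff_add_eq', ← Nat.cast_add, h]

theorem minority_stepA (S : Sample n) :
    minority (stepA a S) m = ({i | S i ∈ defectingTriples a m} : Finset (Fin n)) :=
  filter_congr fun i _ => by simp [defectingTriples, stepA]

theorem dens_defectingTriples_le :
    (defectingTriples a m).dens ≤ 3 * (minority a m).dens ^ 2 := by
  set Q := minority a m
  have hcover : defectingTriples a m ⊆
      Q ×ˢ Q ×ˢ univ ∪ (Q ×ˢ univ ×ˢ Q ∪ univ ×ˢ Q ×ˢ Q) := by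
    intro x hx
    simpa [Q, minority] using ne_and_ne_of_maj3_ne ((mem_filter_univ x).1 hx)
  calc (defectingTriples a m).dens
      ≤ (Q ×ˢ Q ×ˢ univ).dens + ((Q ×ˢ univ ×ˢ Q).dens + (univ ×ˢ Q ×ˢ Q).dens) :=
        (dens_le_dens hcover).trans <|
          (dens_union_le _ _).trans (add_le_add_right (dens_union_le _ _) _)
    _ ≤ Q.dens * (Q.dens * 1) + (Q.dens * (1 * Q.dens) + 1 * (Q.dens * Q.dens)) := by
        simp only [dens_product]
        gcongr <;> exact dens_le_one
    _ = 3 * Q.dens ^ 2 := by ring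

theorem stepPr_eq_dens (E : (Fin n → Fin k) → Prop) [DecidablePred E] :
    stepPr a E = (({S | E (stepA a S)} : Finset (Sample n)).dens : ℝ) := by
  rw [nnratCast_dens, stepPr, Nat.card_eq_fintype_card, Nat.card_eq_fintype_card,
    Fintype.card_subtype]

theorem stepPr_mono {E F : (Fin n → Fin k) → Prop} (h : ∀ b, E b → F b) :
    stepPr a E ≤ stepPr a F := by
  classical
  rw [stepPr_eq_dens, stepPr_eq_dens, NNRat.cast_le]
  exact dens_le_dens (monotone_filter_right _ fun S _ => h (stepA a S))

theorem stepPr_le_card_minority_le (r : ℕ) :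
    stepPr a (fun b => r ≤ #(minority b m)) ≤ (3 * (#(minority a m) : ℝ) ^ 2 / n) ^ r := by
  have h : ({S | r ≤ #(minority (stepA a S) m)} : Finset (Sample n)).dens ≤
      (3 * (#(minority a m) : ℚ≥0) ^ 2 / n) ^ r :=
    calc ({S | r ≤ #(minority (stepA a S) m)} : Finset (Sample n)).dens
        ≤ n.choose r * (defectingTriples a m).dens ^ r := by
          simpa only [minority_stepA, Fintype.card_fin] using
            dens_filter_le_card_filter_mem_le (ι := Fin n) (defectingTriples a m) r
      _ ≤ (n : ℚ≥0) ^ r * (3 * (minority a m).dens ^ 2) ^ r := by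
          gcongr
          · exact_mod_cast Nat.choose_le_pow n r
          · exact dens_defectingTriples_le a m
      _ = (3 * (#(minority a m) : ℚ≥0) ^ 2 / n) ^ r := by
          rw [← mul_pow, dens_eq_card_div_card, Fintype.card_fin]
          congr 1
          field_simp
  rw [stepPr_eq_dens]
  exact (NNRat.cast_le.2 h).trans_eq (by push_cast; rfl)

end Step

theorem tendsto_rpow_mul_log_atTop {p : ℝ} (hp : 0 < p) :
    Tendsto (fun x : ℝ => x ^ p * Real.log x) atTop atTop :=
  (tendsto_rpow_atTop hp).atTop_mul_atTop₀ Real.tendsto_log_atTop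

theorem eventually_mul_rpow_mul_log_sq_div_le {p s : ℝ} (C : ℝ) (h : 2 * p - 1 < s) :
    ∀ᶠ x : ℝ in atTop, C * (x ^ p * Real.log x) ^ 2 / x ≤ x ^ s := by
  have hlog : (fun x : ℝ => C * Real.log x ^ 2) =o[atTop] fun x => x ^ (s - (2 * p - 1)) := by
    simpa only [Real.rpow_two] using
      (isLittleO_log_rpow_rpow_atTop 2 (sub_pos.2 h)).const_mul_left C
  filter_upwards [hlog.eventuallyLE, eventually_gt_atTop 0] with x hx hx0
  calc C * (x ^ p * Real.log x) ^ 2 / x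
      = x ^ (2 * p - 1) * (C * Real.log x ^ 2) := by
        rw [Real.rpow_sub_one hx0.ne', two_mul, Real.rpow_add hx0]
        ring
    _ ≤ x ^ (2 * p - 1) * x ^ (s - (2 * p - 1)) := by
        gcongr
        exact (le_abs_self _).trans (hx.trans_eq (Real.norm_of_nonneg (by positivity)))
    _ = x ^ s := by rw [← Real.rpow_add hx0, add_sub_cancel]

/-- Lemma (very-large majority), third bound: for all sufficiently large `n`, if
`s(c̄) ≥ n/3` with majority color `m` and `n − c_m < n^{1/4}·log n`, then
`Pr[C̄_{m,t+1} ≥ n^{1/4}·log n | C_t = c̄] ≤ 1/n²`. -/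
theorem minority_stays_small : ∃ n₀ : ℕ, ∀ n : ℕ, n₀ ≤ n → ∀ k : ℕ, ∀ c : Fin k → ℕ,
    (∑ h, c h = n) → ∀ a : Fin n → Fin k, (∀ h, cnt a h = c h) →
    ∀ m : Fin k, m ∈ Mset c → (sval c : ℝ) ≥ (n : ℝ) / 3 →
    ((n : ℝ) - (c m : ℝ) < (n : ℝ) ^ ((1 : ℝ) / 4) * Real.log n) →
    stepPr a (fun b =>
        (n : ℝ) - (cnt b m : ℝ) ≥ (n : ℝ) ^ ((1 : ℝ) / 4) * Real.log n) ≤ 1 / (n : ℝ) ^ 2 := by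
  have hlarge := (tendsto_rpow_mul_log_atTop (p := 1 / 4) (by norm_num)).eventually_ge_atTop 5
  have hbase := eventually_mul_rpow_mul_log_sq_div_le (p := 1 / 4) (s := -2 / 5) 3 (by norm_num)
  obtain ⟨n₀, hn₀⟩ :=
    eventually_atTop.1 (tendsto_natCast_atTop_atTop.eventually (hlarge.and hbase))
  refine ⟨n₀, fun n hn k c _ a ha m _ _ hq => ?_⟩
  obtain ⟨hlarge, hbase⟩ := hn₀ n hn
  set L : ℝ := (n : ℝ) ^ ((1 : ℝ) / 4) * Real.log n
  have hminority : (#(minority a m) : ℝ) ≤ L := by rw [card_minority, ha]; exact hq.le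
  calc stepPr a (fun b => (n : ℝ) - (cnt b m : ℝ) ≥ L)
      ≤ stepPr a (fun b => 5 ≤ #(minority b m)) := stepPr_mono a fun b hb => by
        rw [← card_minority] at hb
        exact_mod_cast hlarge.trans hb
    _ ≤ (3 * (#(minority a m) : ℝ) ^ 2 / n) ^ 5 := stepPr_le_card_minority_le a m 5
    _ ≤ (3 * L ^ 2 / n) ^ 5 := by gcongr
    _ ≤ ((n : ℝ) ^ (-2 / 5 : ℝ)) ^ 5 := by gcongr
    _ = 1 / (n : ℝ) ^ 2 := by
      rw [← Real.rpow_mul_natCast n.cast_nonneg, one_div, ← Real.rpow_two,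
        ← Real.rpow_neg n.cast_nonneg]
      norm_num
end

section
/- (General upper bound on convergence time.) There exists n₀ such that for all n ≥ n₀ the following holds. Let λ be any value with 3 ≤ λ < √n. If the initial configuration C_0 = c̄ is a k-cd for n nodes such that, for some m ∈ [k], M(c̄) = {m}, c_m ≥ n/λ, and s(c̄) ≥ 22·√(λ·n·log n), then with probability at least 1 − 110·λ·log n / n², within 100·λ·log n rounds of the 3-majority dynamics every node has color m (i.e., there is a round t ≤ 100·λ·log n with C_{m,t} = n). -/
open Finset

/-!
Write `p j` for the fraction of nodes of color `j` and `Q = ∑ i, p i ^ 2`. A node adopts color `j`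
with probability `p j * (1 + p j - Q)`. While `p m ≤ 2 / 3`, a lead `σ` of `m` over every other
color is therefore multiplied in expectation by at least `1 + p m / 3`. Since a node's
contribution to that lead has second moment of order `p m`, a Bernstein bound and a union bound
show that the actual lead is multiplied by `1 + β / 12`, where `β = 1 / λ ≤ p m`, except with
probability `n * exp (-(n * σ ^ 2 * β / 160)) ≤ 1 / n ^ 2`. A lead cannot exceed `1`, so after
`O(λ log n)` rounds `p m` exceeds `2 / 3`. From then on it stays so except with probability
`exp (-(n / 189))` per round, while the expected minority shrinks by the factor `7 / 9`, and
Markov's inequality gives extinction in `O(log n)` further rounds. The initial bias forces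
`484 * λ * log n ≤ n`, so the exponentially small error is also at most `1 / n ^ 2`.
-/

open scoped BigOperators

namespace ThreeMajority

section ProductSpace

variable {ι α : Type*} [Fintype α]

lemma expect_pi_prod [Fintype ι] [DecidableEq ι] (f : ι → α → ℝ) :
    𝔼 S : ι → α, ∏ i, f i (S i) = ∏ i, 𝔼 x, f i x := by
  simp [Fintype.expect_eq_sum_div_card, prod_div_distrib, prod_univ_sum]

lemma expect_pi_apply [Fintype ι] [DecidableEq ι] [Nonempty α] (i : ι) (f : α → ℝ) :
    𝔼 S : ι → α, f (S i) = 𝔼 x, f x := by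
  have h := expect_pi_prod fun j (x : α) => if j = i then f x else 1
  rw [Fintype.prod_eq_single i fun j hj => by simp [hj]] at h
  simpa using h

lemma expect_fin_cons {N : ℕ} (f : (Fin (N + 1) → α) → ℝ) :
    𝔼 S, f S = 𝔼 x, 𝔼 S : Fin N → α, f (Fin.cons x S) := by
  rw [← expect_product', univ_product_univ]
  exact (Fintype.expect_equiv (Fin.consEquiv fun _ => α) _ _ fun _ => rfl).symm

end ProductSpace

section UniformProbability

variable {ι α : Type*}

/-- The probability of the event `E` under the uniform distribution on a finite type. The
probabilities `stepPr` and `runPr` are by definition of this form. -/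
noncomputable def uniformPr (E : α → Prop) : ℝ :=
  (Nat.card {x // E x} : ℝ) / (Nat.card α : ℝ)

lemma uniformPr_eq_expect [Fintype α] (E : α → Prop) [DecidablePred E] :
    uniformPr E = 𝔼 x, if E x then (1 : ℝ) else 0 := by
  simp [uniformPr, Fintype.expect_eq_sum_div_card, Fintype.card_subtype]

lemma uniformPr_le_one [Finite α] (E : α → Prop) : uniformPr E ≤ 1 :=
  div_le_one_of_le₀ (mod_cast Finite.card_subtype_le E) (Nat.cast_nonneg _)

lemma uniformPr_mono [Finite α] {E E' : α → Prop} (h : ∀ x, E x → E' x) :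
    uniformPr E ≤ uniformPr E' := by
  unfold uniformPr
  gcongr
  exact Nat.card_mono (Set.toFinite {x | E' x}) h

lemma uniformPr_add_uniformPr_not [Finite α] [Nonempty α] (E : α → Prop) :
    uniformPr E + uniformPr (fun x => ¬ E x) = 1 := by
  classical
  cases nonempty_fintype α
  rw [uniformPr_eq_expect, uniformPr_eq_expect, ← expect_add_distrib]
  simp only [ite_not, ite_add_ite, add_zero, zero_add, ite_self]
  exact Fintype.expect_one

lemma uniformPr_exists_le [Fintype ι] [Finite α] (E : ι → α → Prop) :
    uniformPr (fun x => ∃ i, E i x) ≤ ∑ i, uniformPr (E i) := by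
  classical
  cases nonempty_fintype α
  simp only [uniformPr_eq_expect]
  rw [← expect_sum_comm]
  refine expect_le_expect fun x _ => ?_
  have hnonneg : ∀ i ∈ univ, (0 : ℝ) ≤ if E i x then 1 else 0 := fun i _ => by positivity
  split_ifs with h
  · obtain ⟨i, hi⟩ := h
    simpa [hi] using single_le_sum hnonneg (mem_univ i)
  · exact sum_nonneg hnonneg

end UniformProbability

section Concentration

variable {ι α : Type*} [Fintype ι] [Fintype α] {g : α → ℝ}

lemma uniformPr_expect_le_le_pow (g : α → ℝ) {θ : ℝ} (hθ : 0 ≤ θ) (d : ℝ) :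
    uniformPr (fun S : ι → α => 𝔼 i, g (S i) ≤ d) ≤
      (Real.exp (θ * d) * 𝔼 x, Real.exp (-(θ * g x))) ^ Fintype.card ι := by
  classical
  calc uniformPr (fun S : ι → α => 𝔼 i, g (S i) ≤ d)
      ≤ 𝔼 S : ι → α, ∏ i, Real.exp (θ * d) * Real.exp (-(θ * g (S i))) := by
        rw [uniformPr_eq_expect]
        refine expect_le_expect fun S _ => ?_
        simp only [← Real.exp_add, ← Real.exp_sum]
        split_ifs with h
        · have hsum : ∑ i, (θ * d + -(θ * g (S i))) =
              Fintype.card ι * θ * (d - 𝔼 i, g (S i)) := by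
            rw [sum_add_distrib, sum_neg_distrib, sum_const, card_univ, nsmul_eq_mul, ← mul_sum,
              ← Fintype.card_mul_expect]
            ring
          rw [Real.one_le_exp_iff, hsum]
          exact mul_nonneg (by positivity) (sub_nonneg.2 h)
        · positivity
    _ = _ := by
        rw [expect_pi_prod fun _ x => Real.exp (θ * d) * Real.exp (-(θ * g x))]
        simp [← mul_expect]

lemma expect_exp_neg_mul_le [Nonempty α] (hg : ∀ x, |g x| ≤ 1) {θ : ℝ} (hθ₀ : 0 ≤ θ)
    (hθ₁ : θ ≤ 1) :
    𝔼 x, Real.exp (-(θ * g x)) ≤ Real.exp (θ ^ 2 * 𝔼 x, g x ^ 2 - θ * 𝔼 x, g x) := by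
  have hquad : ∀ x, Real.exp (-(θ * g x)) ≤ 1 + (θ ^ 2 * g x ^ 2 - θ * g x) := fun x => by
    have habs : |-(θ * g x)| ≤ 1 := by
      rw [abs_neg, abs_mul, abs_of_nonneg hθ₀]
      exact mul_le_one₀ hθ₁ (abs_nonneg _) (hg x)
    linarith [le_of_abs_le (Real.abs_exp_sub_one_sub_id_le habs)]
  calc 𝔼 x, Real.exp (-(θ * g x))
      ≤ 𝔼 x, (1 + (θ ^ 2 * g x ^ 2 - θ * g x)) := expect_le_expect fun x _ => hquad x
    _ = θ ^ 2 * 𝔼 x, g x ^ 2 - θ * 𝔼 x, g x + 1 := by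
        rw [expect_add_distrib, expect_sub_distrib, mul_expect, mul_expect, Fintype.expect_one,
          add_comm]
    _ ≤ _ := Real.add_one_le_exp _

/-- Keeping the second moment `v` in the exponent is essential: for the counts of a color it is of
the order of the fraction of that color. -/
lemma uniformPr_expect_le_le_exp [Nonempty α] (hg : ∀ x, |g x| ≤ 1) {μ v δ : ℝ}
    (hμ : μ ≤ 𝔼 x, g x) (hv : 𝔼 x, g x ^ 2 ≤ v) (hv₀ : 0 < v) (hδ₀ : 0 ≤ δ) (hδ : δ ≤ 2 * v) :
    uniformPr (fun S : ι → α => 𝔼 i, g (S i) ≤ μ - δ) ≤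
      Real.exp (-(Fintype.card ι * δ ^ 2 / (4 * v))) := by
  set θ := δ / (2 * v) with hθ
  have hθ₀ : 0 ≤ θ := by positivity
  have hθ₁ : θ ≤ 1 := div_le_one_of_le₀ hδ (by positivity)
  have hexponent : θ * (μ - δ) + (θ ^ 2 * 𝔼 x, g x ^ 2 - θ * 𝔼 x, g x) ≤ -(δ ^ 2 / (4 * v)) := by
    have hopt : θ ^ 2 * v - θ * δ = -(δ ^ 2 / (4 * v)) := by rw [hθ]; field_simp; ring
    linarith [mul_le_mul_of_nonneg_left hμ hθ₀, mul_le_mul_of_nonneg_left hv (sq_nonneg θ)]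
  calc uniformPr (fun S : ι → α => 𝔼 i, g (S i) ≤ μ - δ)
      ≤ (Real.exp (θ * (μ - δ)) * 𝔼 x, Real.exp (-(θ * g x))) ^ Fintype.card ι :=
        uniformPr_expect_le_le_pow g hθ₀ _
    _ ≤ Real.exp (-(δ ^ 2 / (4 * v))) ^ Fintype.card ι := by
        gcongr
        grw [expect_exp_neg_mul_le hg hθ₀ hθ₁, ← Real.exp_add, hexponent]
    _ = Real.exp (-(Fintype.card ι * δ ^ 2 / (4 * v))) := by
        rw [← Real.exp_nat_mul]
        congr 1
        ring

end Concentration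

variable {n k : ℕ} {a : Fin n → Fin k} {m : Fin k}

section ColorFractions

/-- The fraction of the `n` nodes that have color `j`. -/
noncomputable def frac (a : Fin n → Fin k) (j : Fin k) : ℝ := (cnt a j : ℝ) / n

/-- The probability that two independent uniform nodes have the same color. -/
noncomputable def collisionPr (a : Fin n → Fin k) : ℝ := ∑ j, frac a j ^ 2

lemma frac_eq_expect (a : Fin n → Fin k) (j : Fin k) :
    frac a j = 𝔼 x, if a x = j then (1 : ℝ) else 0 := by
  simp [frac, cnt, Fintype.expect_eq_sum_div_card]

lemma frac_nonneg (a : Fin n → Fin k) (j : Fin k) : 0 ≤ frac a j := by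
  unfold frac
  positivity

lemma frac_eq_zero {j : Fin k} (h : ∀ x, a x ≠ j) : frac a j = 0 := by
  simp [frac_eq_expect, h]

lemma sum_frac [NeZero n] (a : Fin n → Fin k) : ∑ j, frac a j = 1 := by
  simp only [frac_eq_expect]
  rw [← expect_sum_comm]
  simp

lemma frac_add_frac_le_one [NeZero n] {i j : Fin k} (h : i ≠ j) : frac a i + frac a j ≤ 1 := by
  rw [← sum_frac a, ← sum_pair h]
  exact sum_le_univ_sum_of_nonneg (frac_nonneg a)

lemma frac_le_one [NeZero n] (a : Fin n → Fin k) (j : Fin k) : frac a j ≤ 1 := by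
  rw [← sum_frac a]
  exact single_le_sum (fun i _ => frac_nonneg a i) (mem_univ j)

lemma sq_frac_le_collisionPr (a : Fin n → Fin k) (j : Fin k) : frac a j ^ 2 ≤ collisionPr a :=
  single_le_sum (f := fun i => frac a i ^ 2) (fun _ _ => sq_nonneg _) (mem_univ j)

lemma collisionPr_le [NeZero n] {b : ℝ} (hb : ∀ j, j ≠ m → frac a j ≤ b) :
    collisionPr a ≤ frac a m ^ 2 + b * (1 - frac a m) := by
  have hrest : ∑ j ∈ univ.erase m, frac a j = 1 - frac a m := by
    rw [← sum_frac a, ← add_sum_erase _ _ (mem_univ m), add_sub_cancel_left]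
  rw [collisionPr, ← add_sum_erase _ _ (mem_univ m), ← hrest, mul_sum]
  gcongr with j hj
  rw [sq]
  exact mul_le_mul_of_nonneg_right (hb j (ne_of_mem_erase hj)) (frac_nonneg a j)

lemma expect_ite_eq_eq_collisionPr (a : Fin n → Fin k) :
    𝔼 y, 𝔼 z, (if a y = a z then (1 : ℝ) else 0) = collisionPr a := by
  have hsplit : ∀ y z, (if a y = a z then (1 : ℝ) else 0) =
      ∑ j, (if a y = j then (1 : ℝ) else 0) * if a z = j then 1 else 0 := fun y z => by
    simp [eq_comm]
  simp only [hsplit, collisionPr, expect_sum_comm, ← mul_expect, ← expect_mul, ← frac_eq_expect, sq]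

end ColorFractions

section OneRound

/-- The color adopted by a node that samples the nodes `t.1`, `t.2.1`, `t.2.2`. -/
def adopted (a : Fin n → Fin k) (t : Fin n × Fin n × Fin n) : Fin k :=
  maj3 (a t.1) (a t.2.1) (a t.2.2)

/-- The probability that a given node has color `j` after one round. -/
noncomputable def adoptPr (a : Fin n → Fin k) (j : Fin k) : ℝ :=
  𝔼 t, if adopted a t = j then (1 : ℝ) else 0

/-- A node adopts `j` iff the last two samples have color `j`, or they disagree and the first sample
has color `j`. -/
lemma adoptPr_eq [NeZero n] (a : Fin n → Fin k) (j : Fin k) :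
    adoptPr a j = frac a j * (1 + frac a j - collisionPr a) := by
  have hsplit : ∀ x y z, (if adopted a (x, y, z) = j then (1 : ℝ) else 0) =
      (if a y = j then 1 else 0) * (if a z = j then 1 else 0) +
        (if a x = j then 1 else 0) * (1 - if a y = a z then 1 else 0) := fun x y z => by
    unfold adopted maj3
    grind
  calc adoptPr a j
      = 𝔼 x, 𝔼 y, 𝔼 z, if adopted a (x, y, z) = j then (1 : ℝ) else 0 := by
        simp only [adoptPr, ← univ_product_univ, expect_product]
    _ = frac a j * frac a j + frac a j * (1 - collisionPr a) := by
        simp only [hsplit, expect_add_distrib, ← mul_expect, ← expect_mul, expect_sub_distrib,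
          Fintype.expect_const, expect_ite_eq_eq_collisionPr, ← frac_eq_expect]
    _ = frac a j * (1 + frac a j - collisionPr a) := by ring

lemma stepE_eq_expect (a : Fin n → Fin k) (f : (Fin n → Fin k) → ℝ) :
    stepE a f = 𝔼 S, f (stepA a S) := by
  rw [stepE, Fintype.expect_eq_sum_div_card, Nat.card_eq_fintype_card]

lemma stepE_frac [NeZero n] (a : Fin n → Fin k) (j : Fin k) :
    stepE a (fun b => frac b j) = adoptPr a j := by
  simp only [stepE_eq_expect, frac_eq_expect]
  rw [expect_comm]
  have hnode : ∀ i : Fin n, 𝔼 S, (if stepA a S i = j then (1 : ℝ) else 0) = adoptPr a j :=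
    fun i => expect_pi_apply i fun t => if adopted a t = j then (1 : ℝ) else 0
  simp only [hnode, Fintype.expect_const]

lemma frac_stepA_eq_zero {j : Fin k} (h : ∀ x, a x ≠ j) (S : Sample n) :
    frac (stepA a S) j = 0 := by
  refine frac_eq_zero fun i => ?_
  unfold stepA maj3
  split_ifs <;> exact h _

lemma stepPr_expect_le_le_exp [NeZero n] {w : Fin k → ℝ} (hw : ∀ j, |w j| ≤ 1) {μ v δ : ℝ}
    (hμ : μ ≤ 𝔼 t, w (adopted a t)) (hv : 𝔼 t, w (adopted a t) ^ 2 ≤ v) (hv₀ : 0 < v)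
    (hδ₀ : 0 ≤ δ) (hδ : δ ≤ 2 * v) :
    stepPr a (fun b => 𝔼 i, w (b i) ≤ μ - δ) ≤ Real.exp (-(n * δ ^ 2 / (4 * v))) := by
  have h := uniformPr_expect_le_le_exp (ι := Fin n) (fun t => hw (adopted a t)) hμ hv hv₀ hδ₀ hδ
  rwa [Fintype.card_fin] at h

lemma stepPr_frac_le_le_exp [NeZero n] {μ v δ : ℝ} (hμ : μ ≤ adoptPr a m) (hv : adoptPr a m ≤ v)
    (hv₀ : 0 < v) (hδ₀ : 0 ≤ δ) (hδ : δ ≤ 2 * v) :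
    stepPr a (fun b => frac b m ≤ μ - δ) ≤ Real.exp (-(n * δ ^ 2 / (4 * v))) := by
  simp only [frac_eq_expect]
  refine stepPr_expect_le_le_exp (w := fun c => if c = m then 1 else 0) ?_ hμ ?_ hv₀ hδ₀ hδ
  · intro c
    split_ifs <;> simp
  · simpa [adoptPr] using hv

lemma stepPr_frac_sub_frac_le_le_exp [NeZero n] {j : Fin k} (hj : j ≠ m) {μ v δ : ℝ}
    (hμ : μ ≤ adoptPr a m - adoptPr a j) (hv : adoptPr a m + adoptPr a j ≤ v) (hv₀ : 0 < v)
    (hδ₀ : 0 ≤ δ) (hδ : δ ≤ 2 * v) :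
    stepPr a (fun b => frac b m - frac b j ≤ μ - δ) ≤ Real.exp (-(n * δ ^ 2 / (4 * v))) := by
  simp only [frac_eq_expect, ← expect_sub_distrib]
  refine stepPr_expect_le_le_exp
    (w := fun c => (if c = m then 1 else 0) - if c = j then 1 else 0) ?_ ?_ ?_ hv₀ hδ₀ hδ
  · intro c
    split_ifs <;> simp
  · simpa only [adoptPr, ← expect_sub_distrib] using hμ
  · have hsq : ∀ c, ((if c = m then (1 : ℝ) else 0) - if c = j then 1 else 0) ^ 2 =
        (if c = m then 1 else 0) + if c = j then 1 else 0 := fun c => by grind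
    simpa only [hsq, adoptPr, ← expect_add_distrib] using hv

/-- The second moment is that of the complementary indicator, which is small when `m` is nearly
unanimous. -/
lemma stepPr_frac_le_le_exp_of_compl [NeZero n] {μ v δ : ℝ} (hμ : μ ≤ adoptPr a m)
    (hv : 1 - adoptPr a m ≤ v) (hv₀ : 0 < v) (hδ₀ : 0 ≤ δ) (hδ : δ ≤ 2 * v) :
    stepPr a (fun b => frac b m ≤ μ - δ) ≤ Real.exp (-(n * δ ^ 2 / (4 * v))) := by
  have hshift : ∀ b : Fin n → Fin k,
      frac b m ≤ μ - δ ↔ 𝔼 i, ((if b i = m then 1 else 0) - 1) ≤ (μ - 1) - δ := fun b => by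
    rw [expect_sub_distrib, ← frac_eq_expect, Fintype.expect_one, sub_right_comm,
      sub_le_sub_iff_right]
  simp only [hshift]
  refine stepPr_expect_le_le_exp (w := fun c => (if c = m then 1 else 0) - 1) ?_ ?_ ?_ hv₀ hδ₀ hδ
  · intro c
    split_ifs <;> simp
  · rw [expect_sub_distrib, Fintype.expect_one]
    exact sub_le_sub_right hμ 1
  · have hsq : ∀ c, ((if c = m then (1 : ℝ) else 0) - 1) ^ 2 = 1 - if c = m then 1 else 0 :=
      fun c => by grind
    simpa only [hsq, adoptPr, expect_sub_distrib, Fintype.expect_one] using hv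

end OneRound

section Lead

variable {β σ : ℝ}

/-- Color `m` is held by at least a fraction `β` of the nodes and is ahead of every other color by
at least a fraction `σ`. For a single color the latter is read as `σ ≤ frac a m`, as if there were
an empty second color; this is also the convention of `sval`. -/
structure HasLead (a : Fin n → Fin k) (m : Fin k) (β σ : ℝ) : Prop where
  le_frac : β ≤ frac a m
  lead_le_frac : σ ≤ frac a m
  frac_add_le_frac : ∀ j, j ≠ m → frac a j + σ ≤ frac a m

lemma HasLead.collisionPr_add_le [NeZero n] (h : HasLead a m β σ) (hσ : 0 ≤ σ)
    (hm : frac a m ≤ 2 / 3) : collisionPr a + σ / 3 ≤ frac a m := by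
  have hcollision := collisionPr_le fun j hj => le_sub_iff_add_le.2 (h.frac_add_le_frac j hj)
  linarith [mul_le_mul_of_nonneg_left hm hσ]

lemma HasLead.le_adoptPr [NeZero n] (h : HasLead a m β σ) (hσ : 0 ≤ σ) (hm : frac a m ≤ 2 / 3) :
    frac a m + σ * frac a m / 3 ≤ adoptPr a m := by
  rw [adoptPr_eq]
  linarith [mul_le_mul_of_nonneg_left (h.collisionPr_add_le hσ hm) (frac_nonneg a m)]

lemma HasLead.le_adoptPr_sub_adoptPr [NeZero n] (h : HasLead a m β σ) (hσ : 0 ≤ σ)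
    (hm : frac a m ≤ 2 / 3) {j : Fin k} (hj : j ≠ m) :
    σ * (1 + frac a m / 3) ≤ adoptPr a m - adoptPr a j := by
  have hlead : 0 ≤ frac a m - frac a j - σ := by linarith [h.frac_add_le_frac j hj]
  have hcollision : 1 + frac a j + σ / 3 ≤ 1 + frac a m + frac a j - collisionPr a := by
    linarith [h.collisionPr_add_le hσ hm]
  calc σ * (1 + frac a m / 3) ≤ (frac a m - frac a j) * (1 + frac a j + σ / 3) := by
        nlinarith [mul_nonneg (frac_nonneg a j) hlead, mul_nonneg (frac_nonneg a j) hσ]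
    _ ≤ (frac a m - frac a j) * (1 + frac a m + frac a j - collisionPr a) :=
        mul_le_mul_of_nonneg_left hcollision (by linarith)
    _ = adoptPr a m - adoptPr a j := by rw [adoptPr_eq, adoptPr_eq]; ring

lemma adoptPr_le [NeZero n] {j : Fin k} (hj : frac a j ≤ frac a m) :
    adoptPr a j ≤ 5 / 4 * frac a m := by
  have hj₀ := frac_nonneg a j
  have hfactor : 1 + frac a j - collisionPr a ≤ 5 / 4 := by
    nlinarith [sq_frac_le_collisionPr a m, sq_nonneg (frac a m - 1 / 2)]
  calc adoptPr a j = (1 + frac a j - collisionPr a) * frac a j := by rw [adoptPr_eq, mul_comm]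
    _ ≤ 5 / 4 * frac a m := by nlinarith

lemma HasLead.exp_neg_le_exp_neg (h : HasLead a m β σ) (hβ : 0 < β) :
    Real.exp (-(n * (σ * frac a m / 4) ^ 2 / (4 * (5 / 2 * frac a m)))) ≤
      Real.exp (-(n * σ ^ 2 * β / 160)) := by
  have hm : 0 < frac a m := hβ.trans_le h.le_frac
  rw [Real.exp_le_exp, neg_le_neg_iff]
  calc n * σ ^ 2 * β / 160 ≤ n * σ ^ 2 * frac a m / 160 := by gcongr; exact h.le_frac
    _ = n * (σ * frac a m / 4) ^ 2 / (4 * (5 / 2 * frac a m)) := by field_simp; ring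

lemma HasLead.stepPr_frac_le_le [NeZero n] (h : HasLead a m β σ) (hβ : 0 < β) (hσ : 0 ≤ σ)
    (hm : frac a m ≤ 2 / 3) :
    stepPr a (fun b => frac b m ≤ frac a m + σ * β / 12) ≤ Real.exp (-(n * σ ^ 2 * β / 160)) := by
  have hm₀ : 0 < frac a m := hβ.trans_le h.le_frac
  have hmean : frac a m + σ * β / 12 + σ * frac a m / 4 ≤ adoptPr a m := by
    linarith [h.le_adoptPr hσ hm, mul_le_mul_of_nonneg_left h.le_frac hσ]
  have hmoment : adoptPr a m ≤ 5 / 2 * frac a m := by linarith [adoptPr_le (le_refl (frac a m))]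
  have hdev : σ * frac a m / 4 ≤ 2 * (5 / 2 * frac a m) := by nlinarith [h.lead_le_frac]
  have htail := stepPr_frac_le_le_exp hmean hmoment (by positivity) (by positivity) hdev
  rw [add_sub_cancel_right] at htail
  exact htail.trans (h.exp_neg_le_exp_neg hβ)

lemma HasLead.stepPr_frac_sub_frac_le_le [NeZero n] (h : HasLead a m β σ) (hβ : 0 < β) (hσ : 0 ≤ σ)
    (hm : frac a m ≤ 2 / 3) {j : Fin k} (hj : j ≠ m) :
    stepPr a (fun b => frac b m - frac b j ≤ σ * (1 + β / 12)) ≤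
      Real.exp (-(n * σ ^ 2 * β / 160)) := by
  have hm₀ : 0 < frac a m := hβ.trans_le h.le_frac
  have hmean : σ * (1 + β / 12) + σ * frac a m / 4 ≤ adoptPr a m - adoptPr a j := by
    linarith [h.le_adoptPr_sub_adoptPr hσ hm hj, mul_le_mul_of_nonneg_left h.le_frac hσ]
  have hmoment : adoptPr a m + adoptPr a j ≤ 5 / 2 * frac a m := by
    linarith [adoptPr_le (le_refl (frac a m)),
      adoptPr_le (show frac a j ≤ frac a m by linarith [h.frac_add_le_frac j hj])]
  have hdev : σ * frac a m / 4 ≤ 2 * (5 / 2 * frac a m) := by nlinarith [h.lead_le_frac]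
  have htail := stepPr_frac_sub_frac_le_le_exp hj hmean hmoment (by positivity) (by positivity) hdev
  rw [add_sub_cancel_right] at htail
  exact htail.trans (h.exp_neg_le_exp_neg hβ)

lemma HasLead.hasLead_stepA (h : HasLead a m β σ) (hβ : 0 ≤ β) (hσ : 0 ≤ σ) {S : Sample n}
    (htop : frac a m + σ * β / 12 < frac (stepA a S) m)
    (hrival : ∀ i, a i ≠ m → σ * (1 + β / 12) < frac (stepA a S) m - frac (stepA a S) (a i)) :
    HasLead (stepA a S) m β (σ * (1 + β / 12)) := by
  have hgrow : σ * (1 + β / 12) ≤ frac (stepA a S) m := by linarith [h.lead_le_frac]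
  refine ⟨?_, hgrow, fun j hj => ?_⟩
  · linarith [h.le_frac, mul_nonneg hσ hβ]
  · by_cases hpresent : ∃ i, a i = j
    · obtain ⟨i, rfl⟩ := hpresent
      linarith [hrival i hj]
    · rwa [frac_stepA_eq_zero (not_exists.1 hpresent), zero_add]

/-- The union bound runs over the nodes, standing for the colors present in `a`, because the number
`k` of colors is not bounded in terms of `n`. -/
lemma HasLead.stepPr_not_hasLead_le [NeZero n] (h : HasLead a m β σ) (hβ : 0 < β) (hσ : 0 ≤ σ)
    (hm : frac a m ≤ 2 / 3) :
    stepPr a (fun b => ¬ HasLead b m β (σ * (1 + β / 12))) ≤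
      n * Real.exp (-(n * σ ^ 2 * β / 160)) := by
  let bad (i : Fin n) (b : Fin n → Fin k) : Prop :=
    (a i = m ∧ frac b m ≤ frac a m + σ * β / 12) ∨
      (a i ≠ m ∧ frac b m - frac b (a i) ≤ σ * (1 + β / 12))
  obtain ⟨i₀, hi₀⟩ : ∃ i, a i = m := by
    by_contra! hnone
    linarith [h.le_frac, frac_eq_zero hnone]
  have hcover : ∀ S, ¬ HasLead (stepA a S) m β (σ * (1 + β / 12)) → ∃ i, bad i (stepA a S) := by
    intro S
    contrapose!
    intro hgood
    refine h.hasLead_stepA hβ.le hσ ?_ fun i hi => ?_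
    · exact not_le.1 fun hle => hgood i₀ (.inl ⟨hi₀, hle⟩)
    · exact not_le.1 fun hle => hgood i (.inr ⟨hi, hle⟩)
  have hbad : ∀ i, stepPr a (bad i) ≤ Real.exp (-(n * σ ^ 2 * β / 160)) := fun i => by
    by_cases hi : a i = m
    · refine le_trans (uniformPr_mono fun S hS => ?_) (h.stepPr_frac_le_le hβ hσ hm)
      simpa [bad, hi] using hS
    · refine le_trans (uniformPr_mono fun S hS => ?_) (h.stepPr_frac_sub_frac_le_le hβ hσ hm hi)
      simpa [bad, hi] using hS
  calc stepPr a (fun b => ¬ HasLead b m β (σ * (1 + β / 12)))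
      ≤ uniformPr fun S => ∃ i, bad i (stepA a S) := uniformPr_mono hcover
    _ ≤ ∑ i, stepPr a (bad i) := uniformPr_exists_le _
    _ ≤ ∑ _i : Fin n, Real.exp (-(n * σ ^ 2 * β / 160)) := sum_le_sum fun i _ => hbad i
    _ = n * Real.exp (-(n * σ ^ 2 * β / 160)) := by simp

end Lead

section Supermajority

lemma one_sub_adoptPr_le [NeZero n] (hm : 2 / 3 ≤ frac a m) :
    1 - adoptPr a m ≤ 7 / 9 * (1 - frac a m) := by
  have hcollision := collisionPr_le fun j (hj : j ≠ m) =>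
    le_sub_iff_add_le.2 (frac_add_frac_le_one (a := a) hj)
  set r := 1 - frac a m with hr
  have hfrac : frac a m = 1 - r := by rw [hr]; ring
  have hr₀ : 0 ≤ r := by linarith [frac_le_one a m]
  rw [adoptPr_eq]
  calc 1 - frac a m * (1 + frac a m - collisionPr a)
      ≤ 1 - frac a m * (1 + frac a m - (frac a m ^ 2 + r * r)) := by
        gcongr
    _ = r * (3 * r - 2 * r ^ 2) := by rw [hfrac]; ring
    _ ≤ r * (7 / 9) := by
        gcongr
        nlinarith [show r ≤ 1 / 3 by linarith]
    _ = 7 / 9 * r := mul_comm _ _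

lemma stepPr_not_le_frac_le [NeZero n] (hm : 2 / 3 ≤ frac a m) :
    stepPr a (fun b => ¬ 2 / 3 ≤ frac b m) ≤ Real.exp (-(n / 189)) := by
  have hminority : 1 - adoptPr a m ≤ 7 / 27 := by linarith [one_sub_adoptPr_le hm]
  calc stepPr a (fun b => ¬ 2 / 3 ≤ frac b m)
      ≤ stepPr a (fun b => frac b m ≤ 20 / 27 - 2 / 27) :=
        uniformPr_mono fun S hS => by linarith [not_le.1 hS]
    _ ≤ Real.exp (-(n * (2 / 27) ^ 2 / (4 * (7 / 27)))) :=
        stepPr_frac_le_le_exp_of_compl (by linarith) hminority (by norm_num) (by norm_num)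
          (by norm_num)
    _ = Real.exp (-(n / 189)) := by
        congr 1
        ring

end Supermajority

section Failure

/-- The probability that after `N` rounds started at `a` some node does not have color `m`. -/
noncomputable def failPr (m : Fin k) (N : ℕ) (a : Fin n → Fin k) : ℝ :=
  runPr N a fun S => cnt (trajA a S N) m ≠ n

lemma trajA_cons {N : ℕ} (a : Fin n → Fin k) (s : Sample n) (S : Fin N → Sample n) (t : ℕ) :
    trajA a (Fin.cons s S : Fin (N + 1) → Sample n) (t + 1) = trajA (stepA a s) S t := by
  induction t with
  | zero => simp [trajA]
  | succ t ih =>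
    rw [trajA, ih, trajA]
    simp only [add_lt_add_iff_right]
    rfl

lemma one_sub_failPr_le_runPr [NeZero n] {N : ℕ} {E : (Fin N → Sample n) → Prop}
    (hE : ∀ S, cnt (trajA a S N) m = n → E S) : 1 - failPr m N a ≤ runPr N a E := by
  have hfail : uniformPr (fun S => ¬ E S) ≤ failPr m N a := uniformPr_mono fun S => mt (hE S)
  have hcompl : runPr N a E + uniformPr (fun S => ¬ E S) = 1 := uniformPr_add_uniformPr_not E
  linarith

lemma failPr_zero_le [NeZero n] (a : Fin n → Fin k) (m : Fin k) :
    failPr m 0 a ≤ n * (1 - frac a m) := by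
  have hn : (n : ℝ) ≠ 0 := NeZero.ne _
  have hminority : n * (1 - frac a m) = n - cnt a m := by
    rw [frac]
    field_simp
  have hcnt : cnt a m ≤ n := by simpa [cnt] using card_filter_le univ fun i => a i = m
  rw [hminority, le_sub_iff_add_le]
  rcases hcnt.eq_or_lt with heq | hlt
  · simp [failPr, runPr, trajA, heq]
  · have hsucc : (cnt a m : ℝ) + 1 ≤ n := mod_cast hlt
    linarith [show failPr m 0 a ≤ 1 from uniformPr_le_one _]

lemma failPr_succ (m : Fin k) (N : ℕ) (a : Fin n → Fin k) :
    failPr m (N + 1) a = stepE a (failPr m N) := by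
  classical
  have hfail : ∀ (N : ℕ) (b : Fin n → Fin k), failPr m N b =
      𝔼 S : Fin N → Sample n, if cnt (trajA b S N) m ≠ n then 1 else 0 :=
    fun _ _ => uniformPr_eq_expect _
  simp only [stepE_eq_expect, hfail, expect_fin_cons, trajA_cons]

lemma failPr_succ_le {N : ℕ} {P : (Fin n → Fin k) → Prop} {g : (Fin n → Fin k) → ℝ}
    (hg₀ : ∀ b, 0 ≤ g b) (hg : ∀ b, P b → failPr m N b ≤ g b) :
    failPr m (N + 1) a ≤ stepPr a (fun b => ¬ P b) + stepE a g := by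
  classical
  have hstep : stepPr a (fun b => ¬ P b) = 𝔼 S, if ¬ P (stepA a S) then (1 : ℝ) else 0 :=
    uniformPr_eq_expect _
  rw [failPr_succ, hstep, stepE_eq_expect, stepE_eq_expect, ← expect_add_distrib]
  refine expect_le_expect fun S _ => ?_
  split_ifs with h
  · linarith [hg _ h]
  · linarith [hg₀ (stepA a S), show failPr m N (stepA a S) ≤ 1 from uniformPr_le_one _]

lemma failPr_le_of_two_thirds_le [NeZero n] (N : ℕ) (hm : 2 / 3 ≤ frac a m) :
    failPr m N a ≤ N * Real.exp (-(n / 189)) + (7 / 9) ^ N * (n * (1 - frac a m)) := by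
  induction N generalizing a with
  | zero => simpa using failPr_zero_le a m
  | succ N ih =>
    set ε := Real.exp (-(n / 189))
    have hg₀ : ∀ b : Fin n → Fin k, 0 ≤ N * ε + (7 / 9) ^ N * (n * (1 - frac b m)) := fun b => by
      have := sub_nonneg.2 (frac_le_one b m)
      positivity
    have hmean : stepE a (fun b => N * ε + (7 / 9) ^ N * (n * (1 - frac b m))) =
        N * ε + (7 / 9) ^ N * (n * (1 - adoptPr a m)) := by
      rw [← stepE_frac]
      simp only [stepE_eq_expect, expect_add_distrib, ← mul_expect, expect_sub_distrib,
        Fintype.expect_const]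
    calc failPr m (N + 1) a
        ≤ stepPr a (fun b => ¬ 2 / 3 ≤ frac b m) +
            stepE a (fun b => N * ε + (7 / 9) ^ N * (n * (1 - frac b m))) :=
          failPr_succ_le hg₀ fun b hb => ih hb
      _ ≤ ε + (N * ε + (7 / 9) ^ N * (n * (7 / 9 * (1 - frac a m)))) := by
          rw [hmean]
          gcongr
          · exact stepPr_not_le_frac_le hm
          · exact one_sub_adoptPr_le hm
      _ = (N + 1 : ℕ) * ε + (7 / 9) ^ (N + 1) * (n * (1 - frac a m)) := by
          push_cast
          ring

/-- As long as `m` holds at most two thirds of the nodes its lead grows by the factor `1 + β / 12`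
per round, which is possible for at most `I` rounds; at least `N` rounds remain for the geometric
extinction of the other colors. -/
lemma HasLead.failPr_add_le [NeZero n] {β σ ε : ℝ} {I N : ℕ} (h : HasLead a m β σ) (hβ : 0 < β)
    (hσ : 0 ≤ σ) (hI : 1 < σ * (1 + β / 12) ^ I) (hε : Real.exp (-(n / 189)) ≤ ε)
    (hεσ : n * Real.exp (-(n * σ ^ 2 * β / 160)) ≤ ε) :
    failPr m (N + I) a ≤ (N + I : ℕ) * ε + (7 / 9) ^ N * n := by
  induction I generalizing a σ with
  | zero => linarith [h.lead_le_frac, frac_le_one a m, pow_zero (1 + β / 12)]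
  | succ I ih =>
    rcases le_total (2 / 3) (frac a m) with hm | hm
    · grw [failPr_le_of_two_thirds_le _ hm, hε]
      have hminority : n * (1 - frac a m) ≤ n :=
        mul_le_of_le_one_right (by positivity) (by linarith [frac_nonneg a m])
      grw [hminority, pow_le_pow_of_le_one (by norm_num) (by norm_num) (Nat.le_add_right N (I + 1))]
    · have hε₀ : 0 ≤ ε := (Real.exp_nonneg _).trans hε
      have hgrow : σ ≤ σ * (1 + β / 12) := le_mul_of_one_le_right hσ (by linarith)
      have hI' : 1 < σ * (1 + β / 12) * (1 + β / 12) ^ I := by rwa [mul_assoc, ← pow_succ']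
      have hεσ' : n * Real.exp (-(n * (σ * (1 + β / 12)) ^ 2 * β / 160)) ≤ ε :=
        le_trans (by gcongr) hεσ
      calc failPr m (N + (I + 1)) a
          ≤ stepPr a (fun b => ¬ HasLead b m β (σ * (1 + β / 12))) +
              stepE a (fun _ => (N + I : ℕ) * ε + (7 / 9) ^ N * n) :=
            failPr_succ_le (fun _ => by positivity) fun b hb => ih hb (by positivity) hI' hεσ'
        _ ≤ ε + ((N + I : ℕ) * ε + (7 / 9) ^ N * n) := by
            rw [stepE_eq_expect, Fintype.expect_const]
            gcongr
            exact (h.stepPr_not_hasLead_le hβ hσ hm).trans hεσ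
        _ = (N + (I + 1) : ℕ) * ε + (7 / 9) ^ N * n := by
            push_cast
            ring

end Failure

section Convergence

lemma exp_le_one_add_div_pow {β L : ℝ} {I : ℕ} (hβ₀ : 0 ≤ β) (hβ₁ : β ≤ 1) (hI : 13 * L ≤ I * β) :
    Real.exp L ≤ (1 + β / 12) ^ I := by
  have hbase : Real.exp (β / 13) ≤ 1 + β / 12 := by
    have hinv : 1 - β / 13 ≤ (Real.exp (β / 13))⁻¹ := by
      rw [← Real.exp_neg]
      exact Real.one_sub_le_exp_neg _
    have hpos : 0 < 1 - β / 13 := by linarith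
    calc Real.exp (β / 13) ≤ (1 - β / 13)⁻¹ := (le_inv_comm₀ hpos (Real.exp_pos _)).1 hinv
      _ ≤ 1 + β / 12 := inv_le_of_inv_le₀ (by positivity) (by
          rw [inv_le_iff_one_le_mul₀ (by positivity)]
          nlinarith)
  calc Real.exp L ≤ Real.exp (I * (β / 13)) := Real.exp_le_exp.2 (by linarith)
    _ = Real.exp (β / 13) ^ I := Real.exp_nat_mul _ _
    _ ≤ (1 + β / 12) ^ I := by gcongr

lemma seven_ninths_pow_le_exp {L : ℝ} {N : ℕ} (hN : 27 * L ≤ 2 * N) :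
    (7 / 9 : ℝ) ^ N ≤ Real.exp (-(3 * L)) := by
  have hbase : (7 / 9 : ℝ) ≤ Real.exp (-(2 / 9)) := by
    linarith [Real.one_sub_le_exp_neg (2 / 9)]
  calc (7 / 9 : ℝ) ^ N ≤ Real.exp (-(2 / 9)) ^ N := by gcongr
    _ = Real.exp (N * -(2 / 9)) := (Real.exp_nat_mul _ _).symm
    _ ≤ Real.exp (-(3 * L)) := Real.exp_le_exp.2 (by linarith)

lemma exp_neg_mul_log {x : ℝ} (hx : 0 < x) (r : ℕ) : Real.exp (-(r * Real.log x)) = 1 / x ^ r := by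
  rw [Real.exp_neg, Real.exp_nat_mul, Real.exp_log hx, one_div]

lemma half_lt_log_of_one_lt (hn : 1 < n) : 1 / 2 < Real.log n := by
  linarith [Real.log_two_gt_d9, Real.log_le_log two_pos (show (2 : ℝ) ≤ n from mod_cast hn)]

lemma HasLead.le_one [NeZero n] {β σ : ℝ} (h : HasLead a m β σ) : β ≤ 1 :=
  h.le_frac.trans (frac_le_one a m)

lemma HasLead.lead_le_one [NeZero n] {β σ : ℝ} (h : HasLead a m β σ) : σ ≤ 1 :=
  h.lead_le_frac.trans (frac_le_one a m)

lemma HasLead.failPr_add_le_div {β σ : ℝ} {I N : ℕ} (hn : 1 < n) (h : HasLead a m β σ) (hβ : 0 < β)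
    (hσ : 0 ≤ σ) (hlead : 484 * Real.log n ≤ n * σ ^ 2 * β) (hI : 13 * Real.log n ≤ I * β)
    (hN : 27 * Real.log n ≤ 2 * N) : failPr m (N + I) a ≤ ((N + I : ℕ) + 1) / n ^ 2 := by
  have : NeZero n := ⟨by omega⟩
  have hn₀ : (0 : ℝ) < n := mod_cast NeZero.pos n
  have hlog := half_lt_log_of_one_lt hn
  have hnσ : 484 * Real.log n ≤ n * σ :=
    calc 484 * Real.log n ≤ n * σ ^ 2 * β := hlead
      _ ≤ n * (σ * 1) * 1 := by rw [sq]; gcongr; exacts [h.lead_le_one, h.le_one]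
      _ = n * σ := by ring
  have hnlog : 484 * Real.log n ≤ n := hnσ.trans (mul_le_of_le_one_right hn₀.le h.lead_le_one)
  have hgrow : 1 < σ * (1 + β / 12) ^ I := by
    calc 1 < σ * n := by linarith
      _ = σ * Real.exp (Real.log n) := by rw [Real.exp_log hn₀]
      _ ≤ σ * (1 + β / 12) ^ I := by gcongr; exact exp_le_one_add_div_pow hβ.le h.le_one hI
  have hkeep : Real.exp (-(n / 189)) ≤ 1 / n ^ 2 := by
    rw [← exp_neg_mul_log hn₀, Real.exp_le_exp]
    push_cast
    linarith
  have hstep : n * Real.exp (-(n * σ ^ 2 * β / 160)) ≤ 1 / n ^ 2 := by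
    calc n * Real.exp (-(n * σ ^ 2 * β / 160)) ≤ n * Real.exp (-((3 : ℕ) * Real.log n)) := by
          gcongr
          push_cast
          linarith
      _ = 1 / n ^ 2 := by rw [exp_neg_mul_log hn₀]; field_simp
  have hextinct : (7 / 9 : ℝ) ^ N ≤ 1 / n ^ 3 := by
    rw [← exp_neg_mul_log hn₀]
    exact seven_ninths_pow_le_exp hN
  calc failPr m (N + I) a ≤ (N + I : ℕ) * (1 / n ^ 2) + (7 / 9) ^ N * n :=
        h.failPr_add_le hβ hσ hgrow hkeep hstep
    _ ≤ (N + I : ℕ) * (1 / n ^ 2) + 1 / n ^ 3 * n := by gcongr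
    _ = ((N + I : ℕ) + 1) / n ^ 2 := by field_simp

lemma HasLead.failPr_le {β σ : ℝ} {T : ℕ} (hn : 1 < n) (h : HasLead a m β σ) (hβ : 0 < β)
    (hσ : 0 ≤ σ) (hlead : 484 * Real.log n ≤ n * σ ^ 2 * β) (hT : 28 * Real.log n ≤ T * β) :
    failPr m T a ≤ (T + 1) / n ^ 2 := by
  have : NeZero n := ⟨by omega⟩
  have hlog := half_lt_log_of_one_lt hn
  obtain ⟨N, I, rfl, hIN, hNI⟩ : ∃ N I, N + I = T ∧ I ≤ N ∧ N ≤ I + 1 :=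
    ⟨T - T / 2, T / 2, by omega, by omega, by omega⟩
  have hIN' : (I : ℝ) ≤ N := mod_cast hIN
  have hNI' : (N : ℝ) ≤ I + 1 := mod_cast hNI
  push_cast at hT
  exact h.failPr_add_le_div hn hβ hσ hlead (by nlinarith [h.le_one]) (by nlinarith [h.le_one])

lemma hasLead_of_Mset_eq_singleton [NeZero n] {lam : ℝ} (hM : Mset (cnt a) = {m})
    (hm : (n : ℝ) / lam ≤ cnt a m) : HasLead a m (1 / lam) (sval (cnt a) / n) := by
  have hmax : cnt a m = mval (cnt a) :=
    (mem_filter.1 (show m ∈ Mset (cnt a) by simp [hM])).2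
  have hsval : sval (cnt a) = cnt a m - (univ \ {m}).sup (cnt a) := by
    rw [sval, hM, if_pos (card_singleton m), hmax]
  have hrival : ∀ j, j ≠ m → cnt a j + sval (cnt a) ≤ cnt a m := fun j hj => by
    have hsecond : cnt a j ≤ (univ \ {m}).sup (cnt a) := le_sup (by simpa using hj)
    have hfirst : (univ \ {m}).sup (cnt a) ≤ cnt a m := hmax ▸ sup_mono (subset_univ _)
    omega
  have hlead : sval (cnt a) ≤ cnt a m := hsval ▸ Nat.sub_le _ _
  refine ⟨?_, ?_, fun j hj => ?_⟩ <;> simp only [frac]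
  · have hn : (0 : ℝ) < n := mod_cast NeZero.pos n
    rwa [le_div_iff₀ hn, one_div_mul_eq_div]
  · gcongr
  · rw [← add_div]
    gcongr
    exact_mod_cast hrival j hj

lemma log_le_of_sqrt_le {x lam s : ℝ} (hx : 0 < x) (hlam : 0 < lam)
    (hs : 22 * √(lam * x * Real.log x) ≤ s) :
    484 * Real.log x ≤ x * (s / x) ^ 2 * (1 / lam) := by
  have hsq : lam * x * Real.log x ≤ (s / 22) ^ 2 := (Real.sqrt_le_iff.1 (by linarith)).2
  calc 484 * Real.log x = 22 ^ 2 * (lam * x * Real.log x) / (lam * x) := by field_simp; ring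
    _ ≤ 22 ^ 2 * (s / 22) ^ 2 / (lam * x) := by gcongr
    _ = x * (s / x) ^ 2 * (1 / lam) := by field_simp

end Convergence

end ThreeMajority

open ThreeMajority in
theorem general_upper_bound_general {n k : ℕ} (hn : 1 < n) {lam : ℝ} (hlam : 0 < lam)
    {a : Fin n → Fin k} {m : Fin k} (hM : Mset (cnt a) = {m}) (hm : (n : ℝ) / lam ≤ cnt a m)
    (hs : 22 * √(lam * n * Real.log n) ≤ sval (cnt a)) :
    runPr ⌊100 * lam * Real.log n⌋₊ a
        (fun S => ∃ t : ℕ, (t : ℝ) ≤ 100 * lam * Real.log n ∧ cnt (trajA a S t) m = n) ≥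
      1 - 110 * lam * Real.log n / (n : ℝ) ^ 2 := by
  have : NeZero n := ⟨by omega⟩
  have hlead := hasLead_of_Mset_eq_singleton hM hm
  have hlog := half_lt_log_of_one_lt hn
  set L := Real.log n
  set T := ⌊100 * lam * L⌋₊
  have hlam₁ : 1 ≤ lam := by
    simpa using (one_div_le hlam one_pos).1 hlead.le_one
  have hT_le : (T : ℝ) ≤ 100 * lam * L := Nat.floor_le (by positivity)
  have hT_ge : 100 * lam * L - 1 ≤ T := (Nat.sub_one_lt_floor _).le
  have hT : 28 * L ≤ T * (1 / lam) := by
    rw [mul_one_div, le_div_iff₀ hlam]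
    nlinarith
  have hgrow : 484 * L ≤ n * (sval (cnt a) / n : ℝ) ^ 2 * (1 / lam) :=
    log_le_of_sqrt_le (by positivity) hlam hs
  calc runPr T a (fun S => ∃ t : ℕ, (t : ℝ) ≤ 100 * lam * L ∧ cnt (trajA a S t) m = n)
      ≥ 1 - failPr m T a := one_sub_failPr_le_runPr fun S hS => ⟨T, hT_le, hS⟩
    _ ≥ 1 - (T + 1) / (n : ℝ) ^ 2 := by
        gcongr
        exact hlead.failPr_le hn (by positivity) (by positivity) hgrow hT
    _ ≥ 1 - 110 * lam * L / (n : ℝ) ^ 2 := by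
        gcongr
        nlinarith

/-- Theorem (the general upper bound): for all sufficiently large `n` and any `3 ≤ λ < √n`,
if the initial `k`-cd `c̄` satisfies `M(c̄) = {m}`, `c_m ≥ n/λ` and `s(c̄) ≥ 22·√(λ·n·log n)`,
then with probability at least `1 − 110·λ·log n/n²` there is a round `t ≤ 100·λ·log n`
at which all `n` nodes have color `m`. -/
theorem general_upper_bound : ∃ n₀ : ℕ, ∀ n : ℕ, n₀ ≤ n → ∀ lam : ℝ,
    3 ≤ lam → lam < Real.sqrt n → ∀ k : ℕ, ∀ c : Fin k → ℕ,
    (∑ h, c h = n) → ∀ a : Fin n → Fin k, (∀ h, cnt a h = c h) →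
    ∀ m : Fin k, Mset c = {m} → (n : ℝ) / lam ≤ (c m : ℝ) →
    22 * Real.sqrt (lam * (n : ℝ) * Real.log n) ≤ (sval c : ℝ) →
    runPr (⌊100 * lam * Real.log n⌋₊) a
        (fun S => ∃ t : ℕ, (t : ℝ) ≤ 100 * lam * Real.log n ∧ cnt (trajA a S t) m = n) ≥
      1 - 110 * lam * Real.log n / (n : ℝ) ^ 2 := by
  refine ⟨2, fun n hn lam hlam _ k c _ a ha m hM hm hs => ?_⟩
  obtain rfl : cnt a = c := funext ha
  exact general_upper_bound_general hn (by linarith) hM hm hs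
end

section
/- There exists n₀ such that for all n ≥ n₀ the following holds. Let λ = min{2k, (n/log n)^{1/3}}. If the initial configuration C_0 = c̄ is a k-cd for n nodes such that, for some m ∈ [k], M(c̄) = {m} and s(c̄) ≥ 22·√(λ·n·log n), then with probability at least 1 − 110·λ·log n / n², within 100·λ·log n rounds of the 3-majority dynamics every node has color m (i.e., there is a round t ≤ 100·λ·log n with C_{m,t} = n). -/
open Finset

/-!
Let `x` be the vector of color fractions and call `g` the lead of `m` if `x m` exceeds every other
coordinate by at least `g`. In expectation one round replaces `x j` by
`x j * (1 + x j - ∑ x h ^ 2)`, which multiplies the lead of `m` by at least `1 + x m / 2` as long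
as it is at most `1 / 2`. The number of nodes that adopt `m` minus the number that adopt `j` is a
sum of independent terms whose second moment is of order `x m`, so that by an exponential moment
bound the lead grows at least by the factor `1 + x m / 4`, except with probability
`exp (-Ω(n g² x m))` for each `j`. The leading fraction `x m` is at least `1 / k` and at least
`g`; for `λ = min (2 k) ((n / log n) ^ (1 / 3))` and `g ≥ 22 * √(λ log n / n)` this gives
`x m ≥ 2 / λ`, so the failure probability of a round is at most `1 / n²` and the lead reaches
`1 / 2` within `O(λ log n)` rounds. From then on the expected fraction of nodes with a color other
than `m` is multiplied by at most `3 / 4` in each round, so `12 log n` further rounds eliminate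
these nodes except with probability `1 / n²`.
-/

open scoped BigOperators

section UniformExpectation

variable {Ω ι : Type*} [Fintype Ω]

lemma expect_prod_apply {K : Type*} [Field K] [CharZero K] [Fintype ι] [DecidableEq ι]
    (f : ι → Ω → K) :
    𝔼 S : ι → Ω, ∏ i, f i (S i) = ∏ i, 𝔼 w, f i w := by
  simp only [Fintype.expect_eq_sum_div_card, prod_div_distrib, prod_univ_sum,
    Fintype.piFinset_univ, Fintype.card_pi, Nat.cast_prod]

lemma expect_eval {K : Type*} [Field K] [CharZero K] [Fintype ι] [DecidableEq ι]
    [Nonempty Ω] (i : ι) (f : Ω → K) : 𝔼 S : ι → Ω, f (S i) = 𝔼 w, f w := by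
  have h := expect_prod_apply fun i' w ↦ if i' = i then f w else 1
  rw [Fintype.prod_eq_single i fun i' hi' ↦ by simp [hi']] at h
  simpa using h

lemma expect_fin_succ_pi {M : Type*} [AddCommMonoid M] [Module ℚ≥0 M] {N : ℕ}
    (f : (Fin (N + 1) → Ω) → M) :
    𝔼 S, f S = 𝔼 s, 𝔼 S : Fin N → Ω, f (Fin.cons s S) := by
  rw [← expect_product' univ univ fun s S ↦ f (Fin.cons s S), univ_product_univ]
  exact (Fintype.expect_equiv (Fin.consEquiv fun _ ↦ Ω) _ _ fun _ ↦ rfl).symm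

/-- The probability of the event `E` for the uniform distribution on `Ω`. The probabilities
`stepPr` and `runPr` of the statement are of this form by definition. -/
noncomputable def uniformPr (E : Ω → Prop) : ℝ :=
  (Nat.card {w // E w} : ℝ) / (Nat.card Ω : ℝ)

lemma uniformPr_eq_expect (E : Ω → Prop) [DecidablePred E] :
    uniformPr E = 𝔼 w, if E w then (1 : ℝ) else 0 := by
  rw [uniformPr, Fintype.expect_eq_sum_div_card, sum_boole, Nat.card_eq_fintype_card,
    Nat.card_eq_fintype_card, Fintype.card_subtype]

section Finite

variable {Ω : Type*} [Finite Ω]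

lemma uniformPr_mono {E F : Ω → Prop} (h : ∀ w, E w → F w) : uniformPr E ≤ uniformPr F := by
  unfold uniformPr
  gcongr
  exact Nat.card_le_card_of_injective _ (Subtype.map_injective h Function.injective_id)

lemma uniformPr_le_one (E : Ω → Prop) : uniformPr E ≤ 1 :=
  div_le_one_of_le₀ (mod_cast Finite.card_subtype_le E) (Nat.cast_nonneg _)

lemma uniformPr_not [Nonempty Ω] (E : Ω → Prop) :
    uniformPr (fun w ↦ ¬ E w) = 1 - uniformPr E := by
  classical
  cases nonempty_fintype Ω
  rw [eq_sub_iff_add_eq, uniformPr_eq_expect, uniformPr_eq_expect, ← expect_add_distrib,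
    ← Fintype.expect_one (ι := Ω) (M := ℝ)]
  refine expect_congr rfl fun w _ ↦ ?_
  by_cases h : E w <;> simp [h]

lemma uniformPr_exists_mem_le (s : Finset ι) (E : ι → Ω → Prop) :
    uniformPr (fun w ↦ ∃ i ∈ s, E i w) ≤ ∑ i ∈ s, uniformPr (E i) := by
  classical
  cases nonempty_fintype Ω
  simp only [uniformPr_eq_expect, ← expect_sum_comm]
  refine expect_le_expect fun w _ ↦ ?_
  have nonneg : ∀ i ∈ s, (0 : ℝ) ≤ if E i w then 1 else 0 := fun i _ ↦ by positivity
  split_ifs with h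
  · obtain ⟨i, hi, hE⟩ := h
    simpa [hE] using single_le_sum nonneg hi
  · exact sum_nonneg nonneg

end Finite

lemma expect_le_expect_add_uniformPr_not {f g : Ω → ℝ} {E : Ω → Prop} (hf : ∀ w, f w ≤ 1)
    (hg : ∀ w, 0 ≤ g w) (hfg : ∀ w, E w → f w ≤ g w) :
    𝔼 w, f w ≤ 𝔼 w, g w + uniformPr fun w ↦ ¬ E w := by
  classical
  rw [uniformPr_eq_expect, ← expect_add_distrib]
  refine expect_le_expect fun w _ ↦ ?_
  by_cases h : E w
  · simpa [h] using hfg w h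
  · simpa [h] using (hf w).trans (le_add_of_nonneg_left (hg w))

lemma expect_exp_le {f : Ω → ℝ} [Nonempty Ω] (hf : ∀ w, |f w| ≤ 1) :
    𝔼 w, Real.exp (f w) ≤ Real.exp (𝔼 w, f w + 𝔼 w, f w ^ 2) := by
  have exp_le (w : Ω) : Real.exp (f w) ≤ 1 + (f w + f w ^ 2) := by
    linarith [(abs_le.1 (Real.abs_exp_sub_one_sub_id_le (hf w))).2]
  calc 𝔼 w, Real.exp (f w) ≤ 𝔼 w, (1 + (f w + f w ^ 2)) := expect_le_expect fun w _ ↦ exp_le w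
    _ = 𝔼 w, f w + 𝔼 w, f w ^ 2 + 1 := by
      rw [expect_add_distrib, expect_add_distrib, Fintype.expect_one, add_comm]
    _ ≤ _ := Real.add_one_le_exp _

/-- A Bernstein-type lower tail: exponential Markov inequality, independence of the coordinates,
and `exp x ≤ 1 + x + x ^ 2` for `|x| ≤ 1`. -/
lemma uniformPr_expect_le_le_exp [Fintype ι] [Nonempty Ω] {f : Ω → ℝ} (hf : ∀ w, |f w| ≤ 1)
    {θ : ℝ} (hθ₀ : 0 ≤ θ) (hθ₁ : θ ≤ 1) (τ : ℝ) :
    uniformPr (fun S : ι → Ω ↦ 𝔼 i, f (S i) ≤ τ) ≤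
      Real.exp (Fintype.card ι * (θ * (τ - 𝔼 w, f w) + θ ^ 2 * 𝔼 w, f w ^ 2)) := by
  classical
  have markov (S : ι → Ω) : (if 𝔼 i, f (S i) ≤ τ then (1 : ℝ) else 0) ≤
      Real.exp (Fintype.card ι * (θ * τ)) * ∏ i, Real.exp (-θ * f (S i)) := by
    split_ifs with h
    · rw [← Real.exp_sum, ← mul_sum, ← Fintype.card_mul_expect, ← Real.exp_add,
        Real.one_le_exp_iff]
      have : 0 ≤ Fintype.card ι * (θ * (τ - 𝔼 i, f (S i))) := by
        have := sub_nonneg.2 h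
        positivity
      linarith
    · positivity
  have mgf : 𝔼 w, Real.exp (-θ * f w) ≤ Real.exp (-θ * 𝔼 w, f w + θ ^ 2 * 𝔼 w, f w ^ 2) := by
    have h := expect_exp_le (f := fun w ↦ -θ * f w) fun w ↦ by
      rw [abs_mul, abs_neg, abs_of_nonneg hθ₀]
      exact mul_le_one₀ hθ₁ (abs_nonneg _) (hf w)
    simpa only [mul_pow, neg_sq, ← mul_expect] using h
  calc uniformPr (fun S : ι → Ω ↦ 𝔼 i, f (S i) ≤ τ)
      ≤ 𝔼 S : ι → Ω, Real.exp (Fintype.card ι * (θ * τ)) * ∏ i, Real.exp (-θ * f (S i)) := by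
        rw [uniformPr_eq_expect]
        exact expect_le_expect fun S _ ↦ markov S
    _ = Real.exp (Fintype.card ι * (θ * τ)) * (𝔼 w, Real.exp (-θ * f w)) ^ Fintype.card ι := by
        rw [← mul_expect, expect_prod_apply fun (_ : ι) w ↦ Real.exp (-θ * f w), prod_const,
          card_univ]
    _ ≤ Real.exp (Fintype.card ι * (θ * τ)) *
          Real.exp (-θ * 𝔼 w, f w + θ ^ 2 * 𝔼 w, f w ^ 2) ^ Fintype.card ι := by
        gcongr
    _ = _ := by
        rw [← Real.exp_nat_mul, ← Real.exp_add]
        ring_nf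

end UniformExpectation

section MajorityMap

variable {ι : Type*} {x : ι → ℝ} {m : ι} {g : ℝ}

/-- `x` exceeds all its other coordinates by at least `g` at `m`. For the vector of color fractions
this is the bias `s` of the statement divided by the number of nodes, except that `m` is fixed and
the lead is only bounded below. -/
def HasLead (m : ι) (g : ℝ) (x : ι → ℝ) : Prop := ∀ j, j ≠ m → x j + g ≤ x m

lemma HasLead.mono {g' : ℝ} (h : HasLead m g x) (hg : g' ≤ g) : HasLead m g' x :=
  fun j hj ↦ (add_le_add_right hg _).trans (h j hj)

variable [Fintype ι]

lemma HasLead.le_apply (h : HasLead m g x) (hx : x ∈ stdSimplex ℝ ι) (hg : g ≤ 1) : g ≤ x m := by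
  by_cases hex : ∃ j, j ≠ m
  · obtain ⟨j, hj⟩ := hex
    linarith [h j hj, hx.1 j]
  · push Not at hex
    have hsum := hx.2
    rw [Fintype.sum_eq_single m fun j hj ↦ absurd (hex j) hj] at hsum
    exact hg.trans hsum.ge

lemma HasLead.inv_card_le_apply (h : HasLead m g x) (hx : x ∈ stdSimplex ℝ ι) (hg : 0 ≤ g) :
    1 / (Fintype.card ι : ℝ) ≤ x m := by
  have le_apply (j : ι) : x j ≤ x m := by
    obtain rfl | hj := eq_or_ne j m
    · exact le_rfl
    · linarith [h j hj]
  have hsum := sum_le_card_nsmul univ x (x m) fun j _ ↦ le_apply j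
  rw [hx.2, card_univ, nsmul_eq_mul] at hsum
  exact div_le_of_le_mul₀ (Nat.cast_nonneg _) (hx.1 m) (by linarith)

lemma HasLead.sum_sq_le (h : HasLead m g x) (hx : x ∈ stdSimplex ℝ ι) :
    ∑ j, x j ^ 2 ≤ x m ^ 2 + (1 - x m) * (x m - g) := by
  classical
  have hsum := hx.2
  rw [← add_sum_erase _ _ (mem_univ m)] at hsum ⊢
  have rest : ∑ j ∈ univ.erase m, x j ^ 2 ≤ (∑ j ∈ univ.erase m, x j) * (x m - g) := by
    rw [sum_mul]
    refine sum_le_sum fun j hj ↦ ?_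
    rw [sq]
    exact mul_le_mul_of_nonneg_left (by linarith [h j (ne_of_mem_erase hj)]) (hx.1 j)
  rw [eq_sub_of_add_eq' hsum] at rest
  linarith

/-- The expected color fractions after one round of the 3-majority dynamics, as a function of the
current color fractions `x`. -/
def majorityMap (x : ι → ℝ) (j : ι) : ℝ := x j * (1 + x j - ∑ h, x h ^ 2)

lemma HasLead.mul_le_majorityMap_sub {j : ι} (h : HasLead m g x) (hx : x ∈ stdSimplex ℝ ι)
    (hg : 0 ≤ g) (hj : j ≠ m) :
    g * (1 + x m * (1 - g)) ≤ majorityMap x m - majorityMap x j := by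
  have hxj := hx.1 j
  have hxm := (mem_Icc_of_mem_stdSimplex hx m).2
  have lead := h j hj
  have hsq := h.sum_sq_le hx
  calc g * (1 + x m * (1 - g))
      ≤ g * (1 + x m * (1 - g)) + (x m - x j - g) * (1 - x m * g + x j) :=
        le_add_of_nonneg_right (mul_nonneg (by linarith) (by nlinarith))
    _ = (x m - x j) * (1 + x j + x m - (x m ^ 2 + (1 - x m) * (x m - g))) := by ring
    _ ≤ (x m - x j) * (1 + x j + x m - ∑ h, x h ^ 2) := by
        gcongr
        linarith
    _ = majorityMap x m - majorityMap x j := by unfold majorityMap; ring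

lemma HasLead.majorityMap_add_le {j : ι} (h : HasLead m g x) (hx : x ∈ stdSimplex ℝ ι)
    (hg : 0 ≤ g) (hj : j ≠ m) :
    majorityMap x m + majorityMap x j ≤ 5 / 2 * x m := by
  have hsq : x m ^ 2 ≤ ∑ h, x h ^ 2 :=
    single_le_sum (f := fun h ↦ x h ^ 2) (fun h _ ↦ sq_nonneg (x h)) (mem_univ m)
  have growth_le (i : ι) (hi : x i ≤ x m) : majorityMap x i ≤ 5 / 4 * x m :=
    calc majorityMap x i ≤ x i * (5 / 4) :=
          mul_le_mul_of_nonneg_left (by nlinarith [sq_nonneg (x m - 1 / 2)]) (hx.1 i)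
      _ ≤ 5 / 4 * x m := by linarith
  linarith [growth_le m le_rfl, growth_le j (by linarith [h j hj])]

lemma HasLead.one_sub_majorityMap_le (h : HasLead m g x) (hx : x ∈ stdSimplex ℝ ι)
    (hg₀ : 0 ≤ g) (hg₁ : g ≤ 1) :
    1 - majorityMap x m ≤ (1 - x m) * (1 - g ^ 2) := by
  have hgm := h.le_apply hx hg₁
  have hm := (mem_Icc_of_mem_stdSimplex hx m).2
  calc 1 - majorityMap x m ≤ 1 - x m * (1 + x m - (x m ^ 2 + (1 - x m) * (x m - g))) := by
        unfold majorityMap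
        gcongr
        · exact hx.1 m
        · exact h.sum_sq_le hx
    _ = (1 - x m) * (1 - g * x m) := by ring
    _ ≤ (1 - x m) * (1 - g ^ 2) := by
        have := sub_nonneg.2 hm
        rw [sq]
        gcongr

end MajorityMap

section ColorFractions

variable {n k : ℕ} {a : Fin n → Fin k} {m j : Fin k} {g : ℝ}

/-- The fraction of the nodes that have color `j` in the configuration `a`. -/
noncomputable def colorFrac (a : Fin n → Fin k) (j : Fin k) : ℝ := (cnt a j : ℝ) / n

lemma colorFrac_eq_expect (a : Fin n → Fin k) (j : Fin k) :
    colorFrac a j = 𝔼 i, if a i = j then (1 : ℝ) else 0 := by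
  rw [colorFrac, cnt, Fintype.expect_eq_sum_div_card, sum_boole, Fintype.card_fin]

lemma natCast_mul_colorFrac [NeZero n] (a : Fin n → Fin k) (j : Fin k) :
    n * colorFrac a j = cnt a j := by
  rw [colorFrac, mul_div_cancel₀ _ (NeZero.ne (n : ℝ))]

lemma expect_comp_eq_sum_colorFrac_mul (a : Fin n → Fin k) (f : Fin k → ℝ) :
    𝔼 i, f (a i) = ∑ j, colorFrac a j * f j := by
  simp only [colorFrac_eq_expect, expect_mul, ← expect_sum_comm, ite_mul, one_mul, zero_mul,
    sum_ite_eq, mem_univ, if_true]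

lemma colorFrac_mem_stdSimplex [NeZero n] (a : Fin n → Fin k) :
    colorFrac a ∈ stdSimplex ℝ (Fin k) := by
  refine ⟨fun j ↦ by unfold colorFrac; positivity, ?_⟩
  simpa using (expect_comp_eq_sum_colorFrac_mul a fun _ ↦ 1).symm

lemma colorFrac_eq_zero (h : j ∉ Set.range a) : colorFrac a j = 0 := by
  rw [colorFrac_eq_expect]
  exact expect_eq_zero fun i _ ↦ if_neg fun hi ↦ h ⟨i, hi⟩

/-- This lets the union bound over the colors run over at most `n` of them, however large `k` is. -/
lemma hasLead_colorFrac_of_range_subset [NeZero n] {b : Fin n → Fin k}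
    (hb : Set.range b ⊆ Set.range a) (hg : g ≤ 1)
    (h : ∀ i, a i ≠ m → colorFrac b (a i) + g ≤ colorFrac b m) : HasLead m g (colorFrac b) := by
  intro j hj
  have hb₀ := (colorFrac_mem_stdSimplex b).1
  by_cases hja : j ∈ Set.range a
  · obtain ⟨i, rfl⟩ := hja
    exact h i hj
  rw [colorFrac_eq_zero fun hjb ↦ hja (hb hjb), zero_add]
  by_cases hex : ∃ i, a i ≠ m
  · obtain ⟨i, hi⟩ := hex
    linarith [h i hi, hb₀ (a i)]
  · push Not at hex
    have hbm (i : Fin n) : b i = m := by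
      obtain ⟨i', hi'⟩ := hb ⟨i, rfl⟩
      rw [← hi', hex i']
    simpa [colorFrac_eq_expect, hbm] using hg

lemma cnt_add_sval_le {c : Fin k → ℕ} (hM : Mset c = {m}) (hj : j ≠ m) : c j + sval c ≤ c m := by
  have max_eq : c m = mval c := by
    have : m ∈ Mset c := hM ▸ mem_singleton_self m
    simpa [Mset] using this
  have le_second : c j ≤ (univ \ Mset c).sup c := le_sup (f := c) (by simp [hM, hj])
  have second_le : (univ \ Mset c).sup c ≤ mval c := sup_mono sdiff_subset
  have sval_eq : sval c = mval c - (univ \ Mset c).sup c := if_pos (by simp [hM])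
  omega

lemma hasLead_sval_div (hM : Mset (cnt a) = {m}) :
    HasLead m ((sval (cnt a) : ℝ) / n) (colorFrac a) := by
  intro j hj
  rw [colorFrac, colorFrac, ← add_div]
  gcongr
  exact_mod_cast cnt_add_sval_le hM hj

end ColorFractions

section OneRound

variable {n k : ℕ} {a : Fin n → Fin k} {m j : Fin k} {g : ℝ}

/-- The color adopted in configuration `a` by a node that samples the triple of nodes `w`. -/
def sampleColor (a : Fin n → Fin k) (w : Fin n × Fin n × Fin n) : Fin k :=
  maj3 (a w.1) (a w.2.1) (a w.2.2)

lemma sampleColor_mem_range (a : Fin n → Fin k) (w : Fin n × Fin n × Fin n) :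
    sampleColor a w ∈ Set.range a := by
  unfold sampleColor maj3
  split_ifs <;> exact ⟨_, rfl⟩

lemma colorFrac_stepA (a : Fin n → Fin k) (S : Sample n) (j : Fin k) :
    colorFrac (stepA a S) j = 𝔼 i, if sampleColor a (S i) = j then (1 : ℝ) else 0 :=
  colorFrac_eq_expect _ _

lemma ite_sampleColor_eq (a : Fin n → Fin k) (u v w : Fin n) (j : Fin k) :
    (if sampleColor a (u, v, w) = j then (1 : ℝ) else 0) =
      (if a v = j then 1 else 0) * (if a w = j then 1 else 0) +
        (if a u = j then 1 else 0) * (1 - if a w = a v then 1 else 0) := by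
  unfold sampleColor maj3
  grind

lemma expect_ite_sampleColor_eq [NeZero n] (a : Fin n → Fin k) (j : Fin k) :
    (𝔼 w, if sampleColor a w = j then (1 : ℝ) else 0) = majorityMap (colorFrac a) j := by
  have pair_agree : 𝔼 v, colorFrac a (a v) = ∑ h, colorFrac a h ^ 2 := by
    simp only [expect_comp_eq_sum_colorFrac_mul, sq]
  simp only [ite_sampleColor_eq, ← univ_product_univ, expect_product, expect_add_distrib,
    expect_sub_distrib, ← mul_expect, ← expect_mul, Fintype.expect_const, ← colorFrac_eq_expect,
    pair_agree]
  unfold majorityMap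
  ring

lemma stepE_eq_expect (a : Fin n → Fin k) (f : (Fin n → Fin k) → ℝ) :
    stepE a f = 𝔼 S, f (stepA a S) := by
  rw [stepE, Fintype.expect_eq_sum_div_card, Nat.card_eq_fintype_card]

lemma stepE_colorFrac [NeZero n] (a : Fin n → Fin k) (j : Fin k) :
    stepE a (fun b ↦ colorFrac b j) = majorityMap (colorFrac a) j := by
  simp only [stepE_eq_expect, colorFrac_stepA]
  rw [expect_comm]
  simp only [expect_eval _ fun w ↦ if sampleColor a w = j then (1 : ℝ) else 0,
    expect_ite_sampleColor_eq, Fintype.expect_const]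

lemma stepE_le_stepE_add_stepPr_not {f f' : (Fin n → Fin k) → ℝ} {G : (Fin n → Fin k) → Prop}
    (hf : ∀ b, f b ≤ 1) (hf' : ∀ b, 0 ≤ f' b) (h : ∀ b, G b → f b ≤ f' b) :
    stepE a f ≤ stepE a f' + stepPr a (fun b ↦ ¬ G b) := by
  rw [stepE_eq_expect, stepE_eq_expect]
  exact expect_le_expect_add_uniformPr_not (fun _ ↦ hf _) (fun _ ↦ hf' _) fun _ ↦ h _

lemma stepE_one_sub_colorFrac_le [NeZero n] (h : HasLead m g (colorFrac a)) (hg₀ : 0 ≤ g)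
    (hg₁ : g ≤ 1) :
    stepE a (fun b ↦ 1 - colorFrac b m) ≤ (1 - colorFrac a m) * (1 - g ^ 2) := by
  rw [stepE_eq_expect, expect_sub_distrib, Fintype.expect_one, ← stepE_eq_expect a fun b ↦
    colorFrac b m, stepE_colorFrac]
  exact h.one_sub_majorityMap_le (colorFrac_mem_stdSimplex a) hg₀ hg₁

/-- The Bernstein bound with exponent `θ = g / 20` for the difference of two color fractions: its
expectation exceeds the threshold by `g * colorFrac a m / 4`, its second moment is at most
`5 / 2 * colorFrac a m`. -/
lemma uniformPr_colorFrac_sub_le_le [NeZero n] (h : HasLead m g (colorFrac a)) (hg₀ : 0 ≤ g)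
    (hg₁ : g ≤ 1 / 2) (hj : j ≠ m) :
    uniformPr (fun S ↦ colorFrac (stepA a S) m - colorFrac (stepA a S) j ≤
      g * (1 + colorFrac a m / 4)) ≤ Real.exp (-(n * g ^ 2 * colorFrac a m / 160)) := by
  let f (w : Fin n × Fin n × Fin n) : ℝ :=
    (if sampleColor a w = m then 1 else 0) - if sampleColor a w = j then 1 else 0
  have abs_le (w) : |f w| ≤ 1 := by
    simp only [f]
    split_ifs <;> norm_num
  have mean : 𝔼 w, f w = majorityMap (colorFrac a) m - majorityMap (colorFrac a) j := by
    simp only [f, expect_sub_distrib, expect_ite_sampleColor_eq]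
  have second_moment :
      𝔼 w, f w ^ 2 = majorityMap (colorFrac a) m + majorityMap (colorFrac a) j := by
    rw [← expect_ite_sampleColor_eq, ← expect_ite_sampleColor_eq, ← expect_add_distrib]
    refine expect_congr rfl fun w _ ↦ ?_
    simp only [f]
    grind
  have hx := colorFrac_mem_stdSimplex a
  have hxm := hx.1 m
  have mean_ge : g * (1 + colorFrac a m / 2) ≤ 𝔼 w, f w :=
    calc g * (1 + colorFrac a m / 2) ≤ g * (1 + colorFrac a m * (1 - g)) := by
          gcongr
          nlinarith
      _ ≤ 𝔼 w, f w := mean ▸ h.mul_le_majorityMap_sub hx hg₀ hj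
  have second_moment_le : 𝔼 w, f w ^ 2 ≤ 5 / 2 * colorFrac a m :=
    second_moment ▸ h.majorityMap_add_le hx hg₀ hj
  have tail := uniformPr_expect_le_le_exp (ι := Fin n) abs_le (θ := g / 20) (by positivity)
    (by linarith) (g * (1 + colorFrac a m / 4))
  simp only [f, expect_sub_distrib, ← colorFrac_stepA, Fintype.card_fin] at tail
  refine tail.trans (Real.exp_le_exp.2 ?_)
  simp only [f, expect_sub_distrib] at mean_ge second_moment_le
  calc _ ≤ (n : ℝ) * (g / 20 * (g * (1 + colorFrac a m / 4) - g * (1 + colorFrac a m / 2)) +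
        (g / 20) ^ 2 * (5 / 2 * colorFrac a m)) := by gcongr
    _ = _ := by ring

lemma stepPr_not_hasLead_le [NeZero n] (h : HasLead m g (colorFrac a)) (hg₀ : 0 ≤ g)
    (hg₁ : g ≤ 1 / 2) :
    stepPr a (fun b ↦ ¬ HasLead m (g * (1 + colorFrac a m / 4)) (colorFrac b)) ≤
      n * Real.exp (-(n * g ^ 2 * colorFrac a m / 160)) := by
  have hxm := (mem_Icc_of_mem_stdSimplex (colorFrac_mem_stdSimplex a) m).2
  have exists_of_not (S : Sample n)
      (hS : ¬ HasLead m (g * (1 + colorFrac a m / 4)) (colorFrac (stepA a S))) :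
      ∃ i ∈ univ.filter (a · ≠ m), colorFrac (stepA a S) m - colorFrac (stepA a S) (a i) ≤
        g * (1 + colorFrac a m / 4) := by
    contrapose! hS
    refine hasLead_colorFrac_of_range_subset (a := a)
      (Set.range_subset_iff.2 fun i ↦ sampleColor_mem_range a (S i)) (by nlinarith) fun i hi ↦ ?_
    linarith [hS i (by simpa using hi)]
  calc stepPr a (fun b ↦ ¬ HasLead m (g * (1 + colorFrac a m / 4)) (colorFrac b))
      ≤ _ := (uniformPr_mono exists_of_not).trans (uniformPr_exists_mem_le _ _)
    _ ≤ _ := sum_le_card_nsmul _ _ _ fun i hi ↦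
        uniformPr_colorFrac_sub_le_le h hg₀ hg₁ (mem_filter.1 hi).2
    _ ≤ n * Real.exp (-(n * g ^ 2 * colorFrac a m / 160)) := by
        rw [nsmul_eq_mul]
        gcongr
        exact (card_filter_le _ _).trans_eq (Fintype.card_fin n)

end OneRound

section Runs

variable {n k : ℕ} {a : Fin n → Fin k} {m : Fin k} {g g₀ r ε : ℝ}

/-- The probability that not all nodes have color `m` after exactly `N` rounds started at `a`. -/
noncomputable def failPr (m : Fin k) (N : ℕ) (a : Fin n → Fin k) : ℝ :=
  runPr N a fun S ↦ cnt (trajA a S N) m ≠ n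

lemma failPr_le_one (m : Fin k) (N : ℕ) (a : Fin n → Fin k) : failPr m N a ≤ 1 :=
  uniformPr_le_one _

lemma failPr_zero_le [NeZero n] (m : Fin k) (a : Fin n → Fin k) :
    failPr m 0 a ≤ n * (1 - colorFrac a m) := by
  rw [mul_one_sub, natCast_mul_colorFrac]
  by_cases h : cnt a m = n
  · simp [failPr, runPr, trajA, h]
  · have hle : cnt a m ≤ n := (card_filter_le _ _).trans_eq (Fintype.card_fin n)
    have hlt : (cnt a m : ℝ) + 1 ≤ n := mod_cast hle.lt_of_ne h
    linarith [failPr_le_one m 0 a]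

lemma trajA_cons {N : ℕ} (a : Fin n → Fin k) (s : Sample n) (S : Fin N → Sample n) (t : ℕ) :
    trajA a (Fin.cons s S : Fin (N + 1) → Sample n) (t + 1) = trajA (stepA a s) S t := by
  induction t with
  | zero => simp [trajA]
  | succ t ih =>
    rw [trajA, ih, trajA]
    simp only [add_lt_add_iff_right]
    rfl

lemma failPr_succ (m : Fin k) (N : ℕ) (a : Fin n → Fin k) :
    failPr m (N + 1) a = stepE a (failPr m N) := by
  have eq_expect (M : ℕ) (b : Fin n → Fin k) :
      failPr m M b = 𝔼 S : Fin M → Sample n, if cnt (trajA b S M) m ≠ n then (1 : ℝ) else 0 :=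
    uniformPr_eq_expect _
  simp only [stepE_eq_expect, eq_expect, expect_fin_succ_pi, trajA_cons]

lemma failPr_succ_le {N : ℕ} {f : (Fin n → Fin k) → ℝ} {G : (Fin n → Fin k) → Prop}
    (hf : ∀ b, 0 ≤ f b) (h : ∀ b, G b → failPr m N b ≤ f b) :
    failPr m (N + 1) a ≤ stepE a f + stepPr a (fun b ↦ ¬ G b) :=
  (failPr_succ m N a).trans_le <| stepE_le_stepE_add_stepPr_not (failPr_le_one m N) hf h

lemma one_sub_failPr_le_runPr [NeZero n] {N : ℕ} {B : ℝ} (hN : (N : ℝ) ≤ B) :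
    1 - failPr m N a ≤ runPr N a fun S ↦ ∃ t : ℕ, (t : ℝ) ≤ B ∧ cnt (trajA a S t) m = n :=
  calc 1 - failPr m N a = uniformPr fun S : Fin N → Sample n ↦ ¬ cnt (trajA a S N) m ≠ n :=
        (uniformPr_not _).symm
    _ ≤ _ := uniformPr_mono fun _ hS ↦ ⟨N, hN, not_not.1 hS⟩

/-- In each round, a lead of color `m` that lies between `g₀` and `1 / 2` is multiplied by at
least `1 + r`, except with probability at most `ε`. -/
def LeadGrows (n : ℕ) {k : ℕ} (m : Fin k) (g₀ r ε : ℝ) : Prop :=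
  ∀ (a : Fin n → Fin k) (g : ℝ), g₀ ≤ g → g ≤ 1 / 2 → HasLead m g (colorFrac a) →
    stepPr a (fun b ↦ ¬ HasLead m (g * (1 + r)) (colorFrac b)) ≤ ε

/-- The lead stays above `1 / 2`, so the expected fraction of the nodes of other colors is
multiplied by at most `3 / 4` in each round. -/
lemma LeadGrows.failPr_le_of_half_lead [NeZero n] (H : LeadGrows n m g₀ r ε) (hg₀ : g₀ ≤ 1 / 2)
    (hr : 0 ≤ r) (hε : 0 ≤ ε) (T : ℕ) (ha : HasLead m (1 / 2) (colorFrac a)) :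
    failPr m T a ≤ n * (3 / 4) ^ T * (1 - colorFrac a m) + T * ε := by
  induction T generalizing a with
  | zero => simpa using failPr_zero_le m a
  | succ T ih =>
    have nonneg (b : Fin n → Fin k) :
        0 ≤ n * (3 / 4) ^ T * (1 - colorFrac b m) + T * ε := by
      have := sub_nonneg.2 (mem_Icc_of_mem_stdSimplex (colorFrac_mem_stdSimplex b) m).2
      positivity
    calc failPr m (T + 1) a
        ≤ stepE a (fun b ↦ n * (3 / 4) ^ T * (1 - colorFrac b m) + T * ε) +
            stepPr a (fun b ↦ ¬ HasLead m (1 / 2 * (1 + r)) (colorFrac b)) :=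
          failPr_succ_le nonneg fun b hb ↦ ih (hb.mono (by linarith))
      _ = n * (3 / 4) ^ T * stepE a (fun b ↦ 1 - colorFrac b m) + T * ε +
            stepPr a (fun b ↦ ¬ HasLead m (1 / 2 * (1 + r)) (colorFrac b)) := by
          simp only [stepE_eq_expect, expect_add_distrib, mul_expect, Fintype.expect_const]
      _ ≤ n * (3 / 4) ^ T * ((1 - colorFrac a m) * (1 - (1 / 2) ^ 2)) + T * ε + ε := by
          gcongr
          · exact stepE_one_sub_colorFrac_le ha (by norm_num) (by norm_num)
          · exact H a _ hg₀ le_rfl ha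
      _ = _ := by
          push_cast
          ring

lemma LeadGrows.failPr_le [NeZero n] (H : LeadGrows n m g₀ r ε) (hg₀ : 0 ≤ g₀) (hr : 0 ≤ r)
    (hε : 0 ≤ ε) (t T : ℕ) (hg : g₀ ≤ g) (hg' : g ≤ 1 / 2) (ht : 1 / 2 ≤ g * (1 + r) ^ t)
    (ha : HasLead m g (colorFrac a)) :
    failPr m (t + T) a ≤ n * (3 / 4) ^ T + (t + T) * ε := by
  induction t generalizing a g with
  | zero =>
    have h := H.failPr_le_of_half_lead (hg.trans hg') hr hε T (ha.mono (by simpa using ht))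
    have hxm := (colorFrac_mem_stdSimplex a).1 m
    calc failPr m (0 + T) a ≤ n * (3 / 4) ^ T * (1 - colorFrac a m) + T * ε := by rwa [zero_add]
      _ ≤ n * (3 / 4) ^ T * 1 + T * ε := by
          gcongr
          linarith
      _ = _ := by simp
  | succ t ih =>
    have bound_of_lead (b : Fin n → Fin k) (hb : HasLead m (g * (1 + r)) (colorFrac b)) :
        failPr m (t + T) b ≤ n * (3 / 4) ^ T + (t + T) * ε := by
      refine ih (g := min (1 / 2) (g * (1 + r))) (le_min (hg.trans hg') (by nlinarith))
        (min_le_left _ _) ?_ (hb.mono (min_le_right _ _))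
      rw [min_mul_of_nonneg _ _ (by positivity)]
      refine le_min ?_ (by rwa [mul_assoc, ← pow_succ'])
      exact le_mul_of_one_le_right (by norm_num) (one_le_pow₀ (by linarith))
    calc failPr m (t + 1 + T) a
        ≤ stepE a (fun _ ↦ n * (3 / 4) ^ T + (t + T) * ε) +
            stepPr a (fun b ↦ ¬ HasLead m (g * (1 + r)) (colorFrac b)) := by
          rw [Nat.add_right_comm]
          exact failPr_succ_le (fun _ ↦ by positivity) bound_of_lead
      _ ≤ n * (3 / 4) ^ T + (t + T) * ε + ε := by
          rw [stepE_eq_expect, Fintype.expect_const]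
          gcongr
          exact H a g hg hg' ha
      _ = _ := by
          push_cast
          ring

lemma leadGrows_of_le_max [NeZero n] {ρ : ℝ} (m : Fin k) (hg₀ : 0 ≤ g₀) (hρ : 0 ≤ ρ)
    (hρ' : ρ ≤ max g₀ (1 / k)) :
    LeadGrows n m g₀ (ρ / 4) (n * Real.exp (-(n * g₀ ^ 2 * ρ / 160))) := by
  intro a g hg hg' ha
  have hx := colorFrac_mem_stdSimplex a
  have h₀ := ha.mono hg
  have hρm : ρ ≤ colorFrac a m := by
    have inv_le := h₀.inv_card_le_apply hx hg₀
    rw [Fintype.card_fin] at inv_le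
    exact hρ'.trans (max_le (h₀.le_apply hx (by linarith)) inv_le)
  have hg_nonneg := hg₀.trans hg
  calc stepPr a (fun b ↦ ¬ HasLead m (g * (1 + ρ / 4)) (colorFrac b))
      ≤ stepPr a (fun b ↦ ¬ HasLead m (g * (1 + colorFrac a m / 4)) (colorFrac b)) :=
        uniformPr_mono fun S hS hlead ↦ hS (hlead.mono (by gcongr))
    _ ≤ n * Real.exp (-(n * g ^ 2 * colorFrac a m / 160)) :=
        stepPr_not_hasLead_le ha hg_nonneg hg'
    _ ≤ n * Real.exp (-(n * g₀ ^ 2 * ρ / 160)) := by gcongr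

end Runs

section Parameters

variable {n k : ℕ} {lam : ℝ}

/-- The initial lead `22 * √(λ n log n)` required in the statement, as a fraction of the number
`n` of nodes. -/
noncomputable def initialLead (n : ℕ) (lam : ℝ) : ℝ := 22 * √(lam * n * Real.log n) / n

lemma initialLead_nonneg (n : ℕ) (lam : ℝ) : 0 ≤ initialLead n lam := by
  unfold initialLead
  positivity

lemma natCast_mul_initialLead_sq [NeZero n] (hlam : 0 ≤ lam) :
    n * initialLead n lam ^ 2 = 484 * (lam * Real.log n) := by
  have hn : (n : ℝ) ≠ 0 := NeZero.ne _
  have := Real.log_natCast_nonneg n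
  rw [initialLead, div_pow, mul_pow, Real.sq_sqrt (by positivity)]
  field_simp
  ring

lemma initialLead_le_half [NeZero n] (hlam : 0 ≤ lam) (h : 44 ^ 2 * (lam * Real.log n) ≤ n) :
    initialLead n lam ≤ 1 / 2 := by
  have hn : (0 : ℝ) < n := mod_cast NeZero.pos n
  refine le_of_sq_le_sq (le_of_mul_le_mul_left ?_ hn) (by norm_num)
  rw [natCast_mul_initialLead_sq hlam]
  linarith

lemma two_div_le_initialLead [NeZero n] (hlam : 0 < lam) (h : n ≤ lam ^ 3 * Real.log n) :
    2 / lam ≤ initialLead n lam := by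
  have hn : (0 : ℝ) < n := mod_cast NeZero.pos n
  have := Real.log_natCast_nonneg n
  refine le_of_sq_le_sq (le_of_mul_le_mul_left ?_ hn) (initialLead_nonneg n lam)
  calc n * (2 / lam) ^ 2 ≤ lam ^ 3 * Real.log n * (2 / lam) ^ 2 := by gcongr
    _ = 4 * (lam * Real.log n) := by
      field_simp
      norm_num
    _ ≤ 484 * (lam * Real.log n) := by
      gcongr
      norm_num
    _ = n * initialLead n lam ^ 2 := (natCast_mul_initialLead_sq hlam.le).symm

lemma natCast_le_one_add_pow {t : ℕ} (hlam : 1 ≤ lam)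
    (ht : 3 * lam * Real.log n ≤ t) : (n : ℝ) ≤ (1 + 2 / lam / 4) ^ t := by
  have := Real.log_natCast_nonneg n
  have log_ge : 1 / (3 * lam) ≤ Real.log (1 + 2 / lam / 4) :=
    calc 1 / (3 * lam) ≤ 1 / (2 * lam + 1) := by
          gcongr
          linarith
      _ = 1 - (1 + 2 / lam / 4)⁻¹ := by
          field_simp
          ring
      _ ≤ Real.log (1 + 2 / lam / 4) := Real.one_sub_inv_le_log_of_pos (by positivity)
  refine Real.le_pow_of_log_le (by positivity) ?_
  calc Real.log n = 3 * lam * Real.log n * (1 / (3 * lam)) := by field_simp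
    _ ≤ t * Real.log (1 + 2 / lam / 4) := by gcongr

lemma half_le_initialLead_mul_pow [NeZero n] {t : ℕ} (hlam : 1 ≤ lam) (hlog : 1 ≤ Real.log n)
    (ht : 3 * lam * Real.log n ≤ t) : 1 / 2 ≤ initialLead n lam * (1 + 2 / lam / 4) ^ t := by
  have hn : (1 : ℝ) ≤ n := mod_cast NeZero.one_le
  have sqrt_ge : 1 ≤ √(lam * n * Real.log n) := Real.one_le_sqrt.2 <|
    one_le_mul_of_one_le_of_one_le (one_le_mul_of_one_le_of_one_le hlam hn) hlog
  calc 1 / 2 ≤ 22 * √(lam * n * Real.log n) := by linarith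
    _ = initialLead n lam * n := (div_mul_cancel₀ _ (NeZero.ne _)).symm
    _ ≤ _ := by
      gcongr
      · exact initialLead_nonneg n lam
      · exact natCast_le_one_add_pow hlam ht

lemma natCast_mul_exp_neg_le [NeZero n] {y : ℝ} (hy : 3 * Real.log n ≤ y) :
    n * Real.exp (-y) ≤ 1 / (n : ℝ) ^ 2 := by
  have hn : (0 : ℝ) < n := mod_cast NeZero.pos n
  calc n * Real.exp (-y) ≤ n * Real.exp (-((3 : ℕ) * Real.log n)) := by
        gcongr
        exact_mod_cast hy
    _ = 1 / (n : ℝ) ^ 2 := by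
        rw [Real.exp_neg, Real.exp_nat_mul, Real.exp_log hn]
        field_simp

lemma natCast_mul_three_quarters_pow_le [NeZero n] {T : ℕ} (hT : 12 * Real.log n ≤ T) :
    n * (3 / 4 : ℝ) ^ T ≤ 1 / (n : ℝ) ^ 2 := by
  have log_le := Real.log_le_sub_one_of_pos (show (0 : ℝ) < 3 / 4 by norm_num)
  calc n * (3 / 4 : ℝ) ^ T = n * Real.exp (-(T * -Real.log (3 / 4))) := by
        rw [mul_neg, neg_neg, Real.exp_nat_mul, Real.exp_log (by norm_num)]
    _ ≤ 1 / (n : ℝ) ^ 2 := natCast_mul_exp_neg_le (by nlinarith)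

lemma leadGrows_initialLead [NeZero n] (m : Fin k) (hlam : 0 < lam)
    (hρ : 2 / lam ≤ max (initialLead n lam) (1 / k)) :
    LeadGrows n m (initialLead n lam) (2 / lam / 4) (1 / (n : ℝ) ^ 2) := by
  have := Real.log_natCast_nonneg n
  intro a g hg hg' ha
  refine (leadGrows_of_le_max m (initialLead_nonneg n lam) (by positivity) hρ a g hg hg' ha).trans
    (natCast_mul_exp_neg_le ?_)
  rw [natCast_mul_initialLead_sq hlam.le]
  calc 3 * Real.log n ≤ 484 * 2 / 160 * Real.log n := by
        gcongr
        norm_num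
    _ = 484 * (lam * Real.log n) * (2 / lam) / 160 := by field_simp

/-- The lead reaches `1 / 2` within `t = ⌈3λ log n⌉` rounds, and the remaining `T ≥ 12 log n`
rounds eliminate the other colors. -/
lemma failPr_floor_le [NeZero n] {a : Fin n → Fin k} {m : Fin k} (hlog : 1 ≤ Real.log n)
    (hlam : 1 ≤ lam) (hn : 44 ^ 2 * (lam * Real.log n) ≤ n)
    (hρ : 2 / lam ≤ max (initialLead n lam) (1 / k))
    (ha : HasLead m (initialLead n lam) (colorFrac a)) :
    failPr m ⌊100 * lam * Real.log n⌋₊ a ≤ 110 * lam * Real.log n / (n : ℝ) ^ 2 := by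
  have hlamlog : Real.log n ≤ lam * Real.log n := le_mul_of_one_le_left (by linarith) hlam
  have ht := Nat.le_ceil (3 * lam * Real.log n)
  have ht' := Nat.ceil_lt_add_one (show 0 ≤ 3 * lam * Real.log n by positivity)
  have hN := Nat.floor_le (show 0 ≤ 100 * lam * Real.log n by positivity)
  have hN' := Nat.lt_floor_add_one (100 * lam * Real.log n)
  have htN : ⌈3 * lam * Real.log n⌉₊ ≤ ⌊100 * lam * Real.log n⌋₊ := by
    rw [← Nat.cast_le (α := ℝ)]
    linarith
  obtain ⟨T, hT⟩ := Nat.exists_eq_add_of_le htN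
  rw [hT, Nat.cast_add] at hN hN'
  have main := (leadGrows_initialLead m (by linarith) hρ).failPr_le (initialLead_nonneg n lam)
    (by positivity) (by positivity) _ T le_rfl (initialLead_le_half (by linarith) hn)
    (half_le_initialLead_mul_pow hlam hlog ht) ha
  rw [hT]
  calc _ ≤ n * (3 / 4 : ℝ) ^ T + (⌈3 * lam * Real.log n⌉₊ + T) * (1 / (n : ℝ) ^ 2) := main
    _ ≤ 1 / (n : ℝ) ^ 2 + 100 * lam * Real.log n * (1 / (n : ℝ) ^ 2) := by
        gcongr
        exact natCast_mul_three_quarters_pow_le (by linarith)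
    _ = (1 + 100 * lam * Real.log n) / (n : ℝ) ^ 2 := by ring
    _ ≤ 110 * lam * Real.log n / (n : ℝ) ^ 2 := by
        gcongr
        linarith

lemma two_div_min_le_max [NeZero n] {z : ℝ} (hk : 1 ≤ k) (hz₀ : 0 < z)
    (hz : z ^ 3 * Real.log n = n) :
    2 / min (2 * (k : ℝ)) z ≤ max (initialLead n (min (2 * (k : ℝ)) z)) (1 / k) := by
  have : (1 : ℝ) ≤ k := mod_cast hk
  rcases min_choice (2 * (k : ℝ)) z with h | h <;> rw [h]
  · refine le_max_of_le_right (le_of_eq ?_)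
    field_simp
  · exact le_max_of_le_left (two_div_le_initialLead hz₀ hz.ge)

lemma sq_mul_log_le_of_cube_mul_log_eq {B z : ℝ} (hB : 0 ≤ B) (hBz : B ≤ z) (hlam : lam ≤ z)
    (hz : z ^ 3 * Real.log n = n) : B ^ 2 * (lam * Real.log n) ≤ n := by
  have := Real.log_natCast_nonneg n
  have hz₀ := hB.trans hBz
  calc B ^ 2 * (lam * Real.log n) ≤ B ^ 2 * (z * Real.log n) := by gcongr
    _ ≤ z ^ 2 * (z * Real.log n) := by gcongr
    _ = z ^ 3 * Real.log n := by ring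
    _ = n := hz

lemma rpow_one_third_pow_three {x : ℝ} (hx : 0 ≤ x) : (x ^ ((1 : ℝ) / 3)) ^ 3 = x := by
  rw [← Real.rpow_natCast, ← Real.rpow_mul hx]
  norm_num

lemma exists_forall_log_le {C : ℝ} (hC : 0 < C) :
    ∃ n₀ : ℕ, ∀ n : ℕ, n₀ ≤ n → 1 ≤ Real.log n ∧ C * Real.log n ≤ n := by
  have one_le := (Real.tendsto_log_atTop.comp tendsto_natCast_atTop_atTop).eventually_ge_atTop 1
  have bound := tendsto_natCast_atTop_atTop (R := ℝ) |>.eventually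
    (Real.isLittleO_log_id_atTop.bound (inv_pos.2 hC))
  refine Filter.eventually_atTop.1 ?_
  filter_upwards [one_le, bound] with n hlog hn
  refine ⟨hlog, (le_inv_mul_iff₀ hC).1 ((le_abs_self _).trans ?_)⟩
  simpa using hn

end Parameters

/-- Corollary: with `λ = min{2k, (n/log n)^{1/3}}`, for all sufficiently large `n`, if the
initial `k`-cd `c̄` satisfies `M(c̄) = {m}` and `s(c̄) ≥ 22·√(λ·n·log n)`, then with
probability at least `1 − 110·λ·log n/n²` there is a round `t ≤ 100·λ·log n` at which all
`n` nodes have color `m`. -/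
theorem upper_bound_min_k : ∃ n₀ : ℕ, ∀ n : ℕ, n₀ ≤ n → ∀ k : ℕ, ∀ lam : ℝ,
    lam = min (2 * (k : ℝ)) (((n : ℝ) / Real.log n) ^ ((1 : ℝ) / 3)) → ∀ c : Fin k → ℕ,
    (∑ h, c h = n) → ∀ a : Fin n → Fin k, (∀ h, cnt a h = c h) →
    ∀ m : Fin k, Mset c = {m} →
    22 * Real.sqrt (lam * (n : ℝ) * Real.log n) ≤ (sval c : ℝ) →
    runPr (⌊100 * lam * Real.log n⌋₊) a
        (fun S => ∃ t : ℕ, (t : ℝ) ≤ 100 * lam * Real.log n ∧ cnt (trajA a S t) m = n) ≥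
      1 - 110 * lam * Real.log n / (n : ℝ) ^ 2 := by
  obtain ⟨n₀, hn₀⟩ := exists_forall_log_le (C := 44 ^ 3) (by norm_num)
  refine ⟨n₀, fun n hn k lam hlam c _ a hac m hM hs ↦ ?_⟩
  obtain rfl : cnt a = c := funext hac
  obtain ⟨hlog, hlog_le⟩ := hn₀ n hn
  have : NeZero n := ⟨by rintro rfl; norm_num at hlog⟩
  have hk : 1 ≤ k := m.pos
  set z := ((n : ℝ) / Real.log n) ^ ((1 : ℝ) / 3)
  have hz_pow : z ^ 3 = n / Real.log n := rpow_one_third_pow_three (by positivity)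
  have hz : 44 ≤ z := le_of_pow_le_pow_left₀ three_ne_zero (by positivity)
    (by rwa [hz_pow, le_div_iff₀ (by linarith)])
  have hzn : z ^ 3 * Real.log n = n := by rw [hz_pow, div_mul_cancel₀ _ (by linarith)]
  have hlam_one : 1 ≤ lam := hlam ▸ le_min (by norm_cast; omega) (by linarith)
  have lead : HasLead m (initialLead n lam) (colorFrac a) :=
    (hasLead_sval_div hM).mono (div_le_div_of_nonneg_right hs (Nat.cast_nonneg n))
  have fail_le := failPr_floor_le hlog hlam_one
    (sq_mul_log_le_of_cube_mul_log_eq (by norm_num) hz (hlam ▸ min_le_right _ _) hzn)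
    (hlam ▸ two_div_min_le_max hk (by linarith) hzn) lead
  exact (sub_le_sub_left fail_le 1).trans <| one_sub_failPr_le_runPr (Nat.floor_le (by positivity))
end
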